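/- arXiv:1604.06197 — 2 statements merged into one kernel-verified Lean document; each statement's English description precedes it below -/
import Mathlib

section
/- Let S be a finite subset of the unit sphere 𝕊² ⊆ ℝ³ containing at least two distinct points, and suppose there exists a rotation Q ∈ SO(3) mapping S into 𝕋 = 𝕊² ∩ ℝ³≥0. Then there exist a rotation Q' ∈ SO(3) mapping S into 𝕋, two distinct points s, s' ∈ S, and an index k ∈ {1,2,3} such that the k-th coordinates of Q's and Q's' are both zero (i.e., Q's and Q's' lie on the same edge of 𝕋). -/
/-! Everything takes place in the dual cone `C* = {u | u ⬝ᵥ q ≥ 0 for all q ∈ S}`: a rotation maps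
`S` into `𝕋` exactly when its rows form a positively oriented orthonormal frame in `C*`, and two
points share an edge exactly when both are orthogonal to one row. Call `S` flush if some frame in
`C*` has its first vector orthogonal to two distinct points of `S`; cyclic shifts of frames make
the choice of the first vector harmless. The claim is that `S` is flush.

Turning a frame about one of its vectors until a point of `S` reaches an edge (`Frame.tilt`) shows
that `S` is flush as soon as a point sits at a vertex of `𝕋` (`Frame.not_vertex`). Hence, when `S`
is not flush, any two points of `S` have positive inner product, and some frame `(u, y, u ⨯₃ y)` has
`u ⬝ᵥ p₁ = 0` for a point `p₁ ∈ S`.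

Let `p₂, p₃` be the points of `S` whose projections to the plane `u^⊥` are extreme. The cone
`C* ∩ u^⊥` is spanned by `b = u ⨯₃ p₂` and `c = p₃ ⨯₃ u`, and it contains an orthogonal pair exactly
when `b ⬝ᵥ c ≤ 0`, that is, when `φ(u) = (u ⬝ᵥ p₂) (u ⬝ᵥ p₃) - (p₂ ⬝ᵥ p₃) |u|² ≤ 0`; then `(b, u)`
and `(u, c)` extend to frames (`frames_of_arc`). Now let `u` move in the plane `p₁^⊥`. For fixed
`p₁, p₂, p₃` all constraints `u ⬝ᵥ q ≥ 0`, `b ⬝ᵥ q ≥ 0`, `c ⬝ᵥ q ≥ 0` are linear in `u`, so moving `u`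
in either direction stops at some `κ u + w`, respectively `μ u - w`, where a further constraint is
tight (`exists_extreme`). If `φ ≤ 0` at one of these two vectors, one of the frames there has a
vector orthogonal to two points of `S`, so `S` is flush. Otherwise `φ > 0` at both; as `{φ > 0}` is
closed under addition inside `C*` (`oval_add`), `φ > 0` at their sum `(κ + μ) u`, contradicting
`φ(u) ≤ 0`. -/

open Matrix

/-- `𝕋 = 𝕊² ∩ ℝ³≥0`, the right-angled equilateral spherical triangle. -/
def sphT : Set (Fin 3 → ℝ) := {x | x ⬝ᵥ x = 1 ∧ ∀ k, 0 ≤ x k}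

/-! ### Frames in the dual cone -/

section

variable {S : Finset (Fin 3 → ℝ)}

/-- The vectors `x`, `y`, `x ⨯₃ y` form an orthogonal frame in the dual cone of `S`. They are nonzero
but not normalised, which keeps the algebra polynomial; taking `x ⨯₃ y` as the third vector builds
in the positive orientation. -/
structure Frame (S : Finset (Fin 3 → ℝ)) (x y : Fin 3 → ℝ) : Prop where
  posx : 0 < x ⬝ᵥ x
  posy : 0 < y ⬝ᵥ y
  orth : x ⬝ᵥ y = 0
  nonnegx : ∀ q ∈ S, 0 ≤ x ⬝ᵥ q
  nonnegy : ∀ q ∈ S, 0 ≤ y ⬝ᵥ q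
  nonnegz : ∀ q ∈ S, 0 ≤ (x ⨯₃ y) ⬝ᵥ q

/-- Some frame in the dual cone of `S` has its first vector orthogonal to two distinct points of
`S`: up to normalisation, `S` can be placed in `𝕋` with two points on one edge. -/
def Flush (S : Finset (Fin 3 → ℝ)) : Prop :=
  ∃ x y, Frame S x y ∧ ∃ s ∈ S, ∃ s' ∈ S, s ≠ s' ∧ x ⬝ᵥ s = 0 ∧ x ⬝ᵥ s' = 0

lemma dot_self_nonneg (x : Fin 3 → ℝ) : 0 ≤ x ⬝ᵥ x :=
  Finset.sum_nonneg fun i _ => mul_self_nonneg (x i)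

lemma dot_self_pos {x : Fin 3 → ℝ} (h : x ≠ 0) : 0 < x ⬝ᵥ x := by
  rcases (dot_self_nonneg x).lt_or_eq with h' | h'
  · exact h'
  · exact absurd (dotProduct_self_eq_zero.1 h'.symm) h

lemma cross_dot_self (x y : Fin 3 → ℝ) :
    (x ⨯₃ y) ⬝ᵥ (x ⨯₃ y) = (x ⬝ᵥ x) * (y ⬝ᵥ y) - (x ⬝ᵥ y) ^ 2 := by
  simp [dotProduct, Fin.sum_univ_three, cross_apply]; ring

lemma Frame.cyc {x y : Fin 3 → ℝ} (h : Frame S x y) : Frame S y (x ⨯₃ y) where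
  posx := h.posy
  posy := by
    rw [cross_dot_self, h.orth]
    have := mul_pos h.posx h.posy
    linarith
  orth := by simp
  nonnegx := h.nonnegy
  nonnegy := h.nonnegz
  nonnegz q hq := by
    have e : (y ⨯₃ (x ⨯₃ y)) ⬝ᵥ q = (y ⬝ᵥ y) * (x ⬝ᵥ q) - (x ⬝ᵥ y) * (y ⬝ᵥ q) := by
      simp [dotProduct, Fin.sum_univ_three, cross_apply]; ring
    rw [e, h.orth]
    have := mul_nonneg h.posy.le (h.nonnegx q hq)
    linarith

/-- Expansion of `p ⬝ᵥ q` in the orthogonal basis `x`, `y`, `x ⨯₃ y`, with denominators cleared. -/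
lemma Frame.parseval {x y : Fin 3 → ℝ} (h : Frame S x y) (p q : Fin 3 → ℝ) :
    (x ⬝ᵥ x) * (y ⬝ᵥ y) * (p ⬝ᵥ q) = (y ⬝ᵥ y) * ((x ⬝ᵥ p) * (x ⬝ᵥ q))
      + (x ⬝ᵥ x) * ((y ⬝ᵥ p) * (y ⬝ᵥ q)) + ((x ⨯₃ y) ⬝ᵥ p) * ((x ⨯₃ y) ⬝ᵥ q) := by
  have e : (x ⬝ᵥ x) * (y ⬝ᵥ y) * (p ⬝ᵥ q) = (y ⬝ᵥ y) * ((x ⬝ᵥ p) * (x ⬝ᵥ q))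
      + (x ⬝ᵥ x) * ((y ⬝ᵥ p) * (y ⬝ᵥ q)) + ((x ⨯₃ y) ⬝ᵥ p) * ((x ⨯₃ y) ⬝ᵥ q)
      + (x ⬝ᵥ y) * ((x ⬝ᵥ y) * (p ⬝ᵥ q) - (x ⬝ᵥ p) * (y ⬝ᵥ q) - (x ⬝ᵥ q) * (y ⬝ᵥ p)) := by
    simp [dotProduct, Fin.sum_univ_three, cross_apply]; ring
  rw [e, h.orth]; ring

/-- The planar determinant of the projections of `p` and `q` to the plane orthogonal to `x`,
in the coordinates given by `y` and `x ⨯₃ y`. -/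
lemma Frame.det_eq {x y : Fin 3 → ℝ} (h : Frame S x y) (p q : Fin 3 → ℝ) :
    (y ⬝ᵥ y) * ((x ⨯₃ p) ⬝ᵥ q) =
      (y ⬝ᵥ p) * ((x ⨯₃ y) ⬝ᵥ q) - ((x ⨯₃ y) ⬝ᵥ p) * (y ⬝ᵥ q) := by
  have e : (y ⬝ᵥ y) * ((x ⨯₃ p) ⬝ᵥ q) =
      (y ⬝ᵥ p) * ((x ⨯₃ y) ⬝ᵥ q) - ((x ⨯₃ y) ⬝ᵥ p) * (y ⬝ᵥ q)
      + (x ⬝ᵥ y) * ((y ⨯₃ p) ⬝ᵥ q) := by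
    simp [dotProduct, Fin.sum_univ_three, cross_apply]; ring
  rw [e, h.orth]; ring

/-- Turning a frame about its third vector until a point of `S` becomes orthogonal to the second
vector. The points outside `R` lie on the axis of the rotation, so they stay where they are. -/
lemma Frame.tilt {x y : Fin 3 → ℝ} (h : Frame S x y) {R : Finset (Fin 3 → ℝ)}
    (hRS : R ⊆ S) (hR : R.Nonempty) (hpos : ∀ q ∈ R, 0 < x ⬝ᵥ q)
    (hout : ∀ q ∈ S, q ∉ R → x ⬝ᵥ q = 0 ∧ y ⬝ᵥ q = 0) :
    ∃ x' y', Frame S x' y' ∧ ∃ s ∈ R, y' ⬝ᵥ s = 0 ∧ ∀ q ∈ S, q ∉ R → y' ⬝ᵥ q = 0 := by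
  -- the angle of the rotation is the least `arctan (y ⬝ᵥ q / x ⬝ᵥ q)`, up to the lengths of `x`, `y`
  obtain ⟨s, hs, hmin⟩ := R.exists_min_image (fun q => (y ⬝ᵥ q) / (x ⬝ᵥ q)) hR
  have hX := hpos s hs
  have hY := h.nonnegy s (hRS hs)
  set X := x ⬝ᵥ s with hXd
  set Y := y ⬝ᵥ s with hYd
  have dx : ∀ q, (((y ⬝ᵥ y) * X) • x + ((x ⬝ᵥ x) * Y) • y) ⬝ᵥ q
      = ((y ⬝ᵥ y) * X) * (x ⬝ᵥ q) + ((x ⬝ᵥ x) * Y) * (y ⬝ᵥ q) := by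
    intro q; simp [add_dotProduct]
  have dy : ∀ q, (X • y - Y • x) ⬝ᵥ q = X * (y ⬝ᵥ q) - Y * (x ⬝ᵥ q) := by
    intro q; simp [sub_dotProduct]
  have hyx : y ⬝ᵥ x = 0 := by rw [dotProduct_comm]; exact h.orth
  have px := h.posx
  have py := h.posy
  have hxy := h.orth
  have key : 0 < (y ⬝ᵥ y) * X ^ 2 + (x ⬝ᵥ x) * Y ^ 2 := by positivity
  have hcr : (((y ⬝ᵥ y) * X) • x + ((x ⬝ᵥ x) * Y) • y) ⨯₃ (X • y - Y • x)
      = ((y ⬝ᵥ y) * X ^ 2 + (x ⬝ᵥ x) * Y ^ 2) • (x ⨯₃ y) := by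
    ext i; fin_cases i <;> simp [cross_apply] <;> ring
  refine ⟨((y ⬝ᵥ y) * X) • x + ((x ⬝ᵥ x) * Y) • y, X • y - Y • x,
    ⟨?_, ?_, ?_, ?_, ?_, ?_⟩, s, hs, ?_, ?_⟩
  · simp only [dx, dotProduct_add, dotProduct_smul, smul_eq_mul, hxy, hyx]
    have := mul_pos (mul_pos px py) key
    linarith
  · simp only [dy, dotProduct_sub, dotProduct_smul, smul_eq_mul, hxy, hyx]
    linarith
  · simp only [dx, dotProduct_sub, dotProduct_smul, smul_eq_mul, hxy, hyx]; ring
  · intro q hq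
    rw [dx]
    have := h.nonnegx q hq
    have := h.nonnegy q hq
    positivity
  · intro q hq
    rw [dy]
    by_cases hqR : q ∈ R
    · have := hmin q hqR
      rw [div_le_div_iff₀ hX (hpos q hqR)] at this
      linarith
    · rw [(hout q hq hqR).1, (hout q hq hqR).2]; simp
  · intro q hq
    rw [hcr, smul_dotProduct, smul_eq_mul]
    exact mul_nonneg key.le (h.nonnegz q hq)
  · rw [dy]; ring
  · intro q hq hqR
    rw [dy, (hout q hq hqR).1, (hout q hq hqR).2]; simp

/-- If a point `p` sits at the vertex of `𝕋` spanned by `x ⨯₃ y`, turning about `p` brings a second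
point onto an edge through `p`, so `S` is flush. -/
lemma Frame.not_vertex {x y : Fin 3 → ℝ} (h : Frame S x y) (hS : ¬ Flush S)
    {p s : Fin 3 → ℝ} (hp : p ∈ S) (hs : s ∈ S) (hne : s ≠ p) :
    ¬ (x ⬝ᵥ p = 0 ∧ y ⬝ᵥ p = 0) := by
  classical
  rintro ⟨h1, h2⟩
  have hpos : ∀ q ∈ S.erase p, 0 < x ⬝ᵥ q := by
    intro q hq
    rw [Finset.mem_erase] at hq
    refine lt_of_le_of_ne (h.nonnegx q hq.2) fun h0 => hS ?_
    exact ⟨x, y, h, q, hq.2, p, hp, hq.1, h0.symm, h1⟩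
  obtain ⟨x', y', h', t, ht, h3, h4⟩ := h.tilt (Finset.erase_subset p S) ⟨s, by simp [hs, hne]⟩ hpos (by
    intro q hq hqR
    have : q = p := by by_contra hc; exact hqR (by simp [hq, hc])
    rw [this]; exact ⟨h1, h2⟩)
  rw [Finset.mem_erase] at ht
  exact hS ⟨_, _, h'.cyc, t, ht.2, p, hp, ht.1, h3, h4 p hp (by simp)⟩

/-! ### Planar sets and the frames containing a given vector -/

/-- Points on one great circle, pairwise less than `π / 2` apart: with `n` normal to the circle and
`p` an end point of the arc, `n`, `p`, `n ⨯₃ p` is a frame, and all of `S` is orthogonal to `n`. -/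
lemma flush_of_planar (hdot : ∀ p ∈ S, ∀ q ∈ S, 0 < p ⬝ᵥ q)
    {s s' : Fin 3 → ℝ} (hs : s ∈ S) (hs' : s' ∈ S) (hne : s ≠ s')
    {n : Fin 3 → ℝ} (hn : 0 < n ⬝ᵥ n) (hpl : ∀ q ∈ S, n ⬝ᵥ q = 0) : Flush S := by
  obtain ⟨p, hp, hmin⟩ := S.exists_min_image
    (fun q => ((n ⨯₃ s) ⬝ᵥ q) / (s ⬝ᵥ q)) ⟨s, hs⟩
  refine ⟨n, p, ⟨hn, hdot p hp p hp, hpl p hp, fun q hq => (hpl q hq).ge,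
    fun q hq => (hdot p hp q hq).le, fun q hq => ?_⟩, s, hs, s', hs', hne, hpl s hs, hpl s' hs'⟩
  have := hmin q hq
  rw [div_le_div_iff₀ (hdot s hs p hp) (hdot s hs q hq)] at this
  have e : (s ⬝ᵥ s) * ((n ⨯₃ p) ⬝ᵥ q) = ((n ⨯₃ s) ⬝ᵥ q) * (s ⬝ᵥ p)
      - ((n ⨯₃ s) ⬝ᵥ p) * (s ⬝ᵥ q) + (n ⬝ᵥ s) * ((s ⨯₃ p) ⬝ᵥ q) := by
    simp [dotProduct, Fin.sum_univ_three, cross_apply]; ring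
  rw [hpl s hs] at e
  refine nonneg_of_mul_nonneg_right (a := s ⬝ᵥ s) ?_ (hdot s hs s hs)
  rw [e]; linarith

/-- If `u ⨯₃ p₂` and `p₃ ⨯₃ u` lie in the dual cone and make an angle of at least `π / 2`, then each of
them completes `u` to a frame. -/
lemma frames_of_arc (hS : ¬ Flush S) (hdot : ∀ p ∈ S, ∀ q ∈ S, 0 < p ⬝ᵥ q)
    {s s' : Fin 3 → ℝ} (hs : s ∈ S) (hs' : s' ∈ S) (hne : s ≠ s')
    {u p₁ p₂ p₃ : Fin 3 → ℝ} (h₁ : p₁ ∈ S) (h₂ : p₂ ∈ S) (h₃ : p₃ ∈ S)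
    (hu : 0 < u ⬝ᵥ u) (hu₁ : u ⬝ᵥ p₁ = 0)
    (ha : ∀ q ∈ S, 0 ≤ u ⬝ᵥ q) (hb : ∀ q ∈ S, 0 ≤ (u ⨯₃ p₂) ⬝ᵥ q)
    (hc : ∀ q ∈ S, 0 ≤ (p₃ ⨯₃ u) ⬝ᵥ q)
    (hφ : (u ⬝ᵥ p₂) * (u ⬝ᵥ p₃) ≤ (p₂ ⬝ᵥ p₃) * (u ⬝ᵥ u)) :
    Frame S (u ⨯₃ p₂) u ∧ Frame S u (p₃ ⨯₃ u) := by
  have pos : ∀ p ∈ S, 0 < (u ⨯₃ p) ⬝ᵥ (u ⨯₃ p) := by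
    intro p hp
    apply dot_self_pos
    intro h0
    have e : (u ⬝ᵥ u) * (p₁ ⬝ᵥ p) = (u ⬝ᵥ p₁) * (u ⬝ᵥ p) + (p₁ ⨯₃ u) ⬝ᵥ (p ⨯₃ u) := by
      simp [dotProduct, Fin.sum_univ_three, cross_apply]; ring
    have h0' : p ⨯₃ u = 0 := by rw [← cross_anticomm, h0, neg_zero]
    rw [hu₁, h0'] at e
    have := mul_pos hu (hdot p₁ h₁ p hp)
    simp at e
    rcases e with e | e <;> simp [e] at this
  have posb := pos p₂ h₂
  have posc : 0 < (p₃ ⨯₃ u) ⬝ᵥ (p₃ ⨯₃ u) := by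
    have := pos p₃ h₃
    rw [← cross_anticomm] at this
    rwa [neg_dotProduct, dotProduct_neg, neg_neg] at this
  have hbc : (u ⨯₃ p₂) ⬝ᵥ (p₃ ⨯₃ u) ≤ 0 := by
    have e : (u ⨯₃ p₂) ⬝ᵥ (p₃ ⨯₃ u) = (u ⬝ᵥ p₂) * (u ⬝ᵥ p₃) - (p₂ ⬝ᵥ p₃) * (u ⬝ᵥ u) := by
      simp [dotProduct, Fin.sum_univ_three, cross_apply]; ring
    linarith
  -- `b = u ⨯₃ p₂` and `c = p₃ ⨯₃ u` span `u^⊥`, and `b ⨯₃ u`, `u ⨯₃ c` are expanded in that basis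
  have id₁ : ∀ q, ((u ⨯₃ p₂) ⬝ᵥ p₃) * (((u ⨯₃ p₂) ⨯₃ u) ⬝ᵥ q) =
      ((u ⨯₃ p₂) ⬝ᵥ (u ⨯₃ p₂)) * ((p₃ ⨯₃ u) ⬝ᵥ q)
        - ((u ⨯₃ p₂) ⬝ᵥ (p₃ ⨯₃ u)) * ((u ⨯₃ p₂) ⬝ᵥ q) := by
    intro q; simp [dotProduct, Fin.sum_univ_three, cross_apply]; ring
  have id₂ : ∀ q, ((u ⨯₃ p₂) ⬝ᵥ p₃) * ((u ⨯₃ (p₃ ⨯₃ u)) ⬝ᵥ q) =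
      ((p₃ ⨯₃ u) ⬝ᵥ (p₃ ⨯₃ u)) * ((u ⨯₃ p₂) ⬝ᵥ q)
        - ((u ⨯₃ p₂) ⬝ᵥ (p₃ ⨯₃ u)) * ((p₃ ⨯₃ u) ⬝ᵥ q) := by
    intro q; simp [dotProduct, Fin.sum_univ_three, cross_apply]; ring
  -- if `b` and `c` are parallel, they are opposite, which forces `S` into the plane `b^⊥`
  have hdet : 0 < (u ⨯₃ p₂) ⬝ᵥ p₃ := by
    refine lt_of_le_of_ne (hb p₃ h₃) fun h0 => hS ?_
    refine flush_of_planar hdot hs hs' hne posb fun q hq => ?_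
    have e₁ := id₁ q
    have e₂ := id₂ q
    rw [← h0] at e₁ e₂
    have t₁ := mul_nonneg posc.le (hb q hq)
    have t₂ := mul_nonneg_of_nonpos_of_nonpos hbc (neg_nonpos.2 (hc q hq))
    have : ((p₃ ⨯₃ u) ⬝ᵥ (p₃ ⨯₃ u)) * ((u ⨯₃ p₂) ⬝ᵥ q) = 0 := by linarith
    exact (mul_eq_zero.1 this).resolve_left posc.ne'
  refine ⟨⟨posb, hu, by simp [dotProduct_comm], hb, ha, fun q hq => ?_⟩,
    ⟨hu, posc, by simp, ha, hc, fun q hq => ?_⟩⟩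
  · refine nonneg_of_mul_nonneg_right (a := (u ⨯₃ p₂) ⬝ᵥ p₃) ?_ hdet
    rw [id₁]
    have t₁ := mul_nonneg posb.le (hc q hq)
    have t₂ := mul_nonneg_of_nonpos_of_nonpos hbc (neg_nonpos.2 (hb q hq))
    linarith
  · refine nonneg_of_mul_nonneg_right (a := (u ⨯₃ p₂) ⬝ᵥ p₃) ?_ hdet
    rw [id₂]
    have t₁ := mul_nonneg posc.le (hb q hq)
    have t₂ := mul_nonneg_of_nonpos_of_nonpos hbc (neg_nonpos.2 (hc q hq))
    linarith

/-! ### The quadratic cone and its extreme rays -/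

/-- The cone `(p ⬝ᵥ q) |u|² < (u ⬝ᵥ p) (u ⬝ᵥ q)`, within the half spaces `u ⬝ᵥ p ≥ 0` and `u ⬝ᵥ q ≥ 0`,
is closed under addition. -/
lemma oval_add {p q u v : Fin 3 → ℝ} (hpq : 0 ≤ p ⬝ᵥ q)
    (hup : 0 ≤ u ⬝ᵥ p) (huq : 0 ≤ u ⬝ᵥ q) (hvp : 0 ≤ v ⬝ᵥ p) (hvq : 0 ≤ v ⬝ᵥ q)
    (hu : (p ⬝ᵥ q) * (u ⬝ᵥ u) < (u ⬝ᵥ p) * (u ⬝ᵥ q))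
    (hv : (p ⬝ᵥ q) * (v ⬝ᵥ v) < (v ⬝ᵥ p) * (v ⬝ᵥ q)) :
    (p ⬝ᵥ q) * ((u + v) ⬝ᵥ (u + v)) < ((u + v) ⬝ᵥ p) * ((u + v) ⬝ᵥ q) := by
  have cs : (u ⬝ᵥ v) ^ 2 ≤ (u ⬝ᵥ u) * (v ⬝ᵥ v) := by
    have := cross_dot_self u v
    have := dot_self_nonneg (u ⨯₃ v)
    linarith
  have hmul : ((p ⬝ᵥ q) * (u ⬝ᵥ u)) * ((p ⬝ᵥ q) * (v ⬝ᵥ v)) ≤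
      ((u ⬝ᵥ p) * (u ⬝ᵥ q)) * ((v ⬝ᵥ p) * (v ⬝ᵥ q)) := by
    have := dot_self_nonneg v
    gcongr
  have hcross : 2 * ((p ⬝ᵥ q) * (u ⬝ᵥ v)) ≤
      (u ⬝ᵥ p) * (v ⬝ᵥ q) + (u ⬝ᵥ q) * (v ⬝ᵥ p) := by
    refine abs_le_of_sq_le_sq' ?_ (by positivity) |>.2
    nlinarith [sq_nonneg ((u ⬝ᵥ p) * (v ⬝ᵥ q) - (u ⬝ᵥ q) * (v ⬝ᵥ p)),
      mul_le_mul_of_nonneg_left cs (sq_nonneg (p ⬝ᵥ q))]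
  have e : (u + v) ⬝ᵥ (u + v) = u ⬝ᵥ u + 2 * (u ⬝ᵥ v) + v ⬝ᵥ v := by
    simp [add_dotProduct, dotProduct_add, dotProduct_comm v u]; ring
  rw [e, add_dotProduct, add_dotProduct]
  nlinarith

/-- Inside the plane spanned by `u` and `w`, moving from the ray of `u` towards `w` as far as the
constraints in `G` allow makes one of them tight. -/
lemma exists_extreme {G : Finset (Fin 3 → ℝ)} (hG : G.Nonempty) {u : Fin 3 → ℝ}
    (hu : ∀ g ∈ G, 0 < u ⬝ᵥ g) (w : Fin 3 → ℝ) :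
    ∃ κ : ℝ, (∀ g ∈ G, 0 ≤ (κ • u + w) ⬝ᵥ g) ∧ ∃ g ∈ G, (κ • u + w) ⬝ᵥ g = 0 := by
  obtain ⟨g, hg, hmax⟩ := G.exists_max_image (fun g => -(w ⬝ᵥ g) / (u ⬝ᵥ g)) hG
  refine ⟨-(w ⬝ᵥ g) / (u ⬝ᵥ g), fun f hf => ?_, g, hg, ?_⟩
  · have := hmax f hf
    rw [div_le_iff₀ (hu f hf)] at this
    rw [add_dotProduct, smul_dotProduct, smul_eq_mul]
    linarith
  · have := (hu g hg).ne'
    rw [add_dotProduct, smul_dotProduct, smul_eq_mul]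
    field_simp
    ring

/-! ### Sliding a frame along an edge -/

/-- The main step: a placement of `S` in `𝕋` with one point `p₁` on an edge can be changed to one
with two points on an edge, by sliding `u` in the plane orthogonal to `p₁`. -/
lemma flush_of_frame (hdot : ∀ p ∈ S, ∀ q ∈ S, 0 < p ⬝ᵥ q)
    {s s' : Fin 3 → ℝ} (hs : s ∈ S) (hs' : s' ∈ S) (hne : s ≠ s')
    {u y p₁ : Fin 3 → ℝ} (h : Frame S u y) (h₁ : p₁ ∈ S) (hu₁ : u ⬝ᵥ p₁ = 0) : Flush S := by
  classical
  by_contra hS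
  have hYZ : ∀ q ∈ S, 0 < y ⬝ᵥ q + (u ⨯₃ y) ⬝ᵥ q := by
    intro q hq
    have n₁ := h.nonnegy q hq
    have n₂ := h.nonnegz q hq
    refine lt_of_le_of_ne (by positivity) fun h0 => ?_
    have y0 : y ⬝ᵥ q = 0 := by linarith
    have z0 : (u ⨯₃ y) ⬝ᵥ q = 0 := by linarith
    have e := h.parseval p₁ q
    rw [hu₁, y0, z0] at e
    have := mul_pos (mul_pos h.posx h.posy) (hdot p₁ h₁ q hq)
    linarith
  -- projections to `u^⊥` lie in the quadrant of `y` and `z = u ⨯₃ y`, and are nonzero by `hYZ`, so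
  -- the ratio `z / (y + z)` orders them by angle
  obtain ⟨p₂, h₂, hmin⟩ := S.exists_min_image
    (fun q => ((u ⨯₃ y) ⬝ᵥ q) / (y ⬝ᵥ q + (u ⨯₃ y) ⬝ᵥ q)) ⟨s, hs⟩
  obtain ⟨p₃, h₃, hmax⟩ := S.exists_max_image
    (fun q => ((u ⨯₃ y) ⬝ᵥ q) / (y ⬝ᵥ q + (u ⨯₃ y) ⬝ᵥ q)) ⟨s, hs⟩
  have swap : ∀ v p q : Fin 3 → ℝ, (p ⨯₃ v) ⬝ᵥ q = (v ⨯₃ q) ⬝ᵥ p := by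
    intro v p q; simp [dotProduct, Fin.sum_univ_three, cross_apply]; ring
  have hb : ∀ q ∈ S, 0 ≤ (u ⨯₃ p₂) ⬝ᵥ q := by
    intro q hq
    have := hmin q hq
    rw [div_le_div_iff₀ (hYZ p₂ h₂) (hYZ q hq)] at this
    refine nonneg_of_mul_nonneg_right (a := y ⬝ᵥ y) ?_ h.posy
    rw [h.det_eq]
    linarith
  have hc : ∀ q ∈ S, 0 ≤ (p₃ ⨯₃ u) ⬝ᵥ q := by
    intro q hq
    have := hmax q hq
    rw [div_le_div_iff₀ (hYZ q hq) (hYZ p₃ h₃)] at this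
    refine nonneg_of_mul_nonneg_right (a := y ⬝ᵥ y) ?_ h.posy
    rw [swap, h.det_eq]
    linarith
  have hφ : (u ⬝ᵥ p₂) * (u ⬝ᵥ p₃) ≤ (p₂ ⬝ᵥ p₃) * (u ⬝ᵥ u) := by
    refine le_of_mul_le_mul_left (a := y ⬝ᵥ y) ?_ h.posy
    have e := h.parseval p₂ p₃
    have := mul_nonneg h.posx.le (mul_nonneg (h.nonnegy p₂ h₂) (h.nonnegy p₃ h₃))
    have := mul_nonneg (h.nonnegz p₂ h₂) (h.nonnegz p₃ h₃)
    linarith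
  -- normals of all the constraints on `u`, except those that hold with equality for trivial reasons
  let G : Finset (Fin 3 → ℝ) := S.erase p₁ ∪
    ((S.erase p₂).image (fun q => p₂ ⨯₃ q) ∪ (S.erase p₃).image (fun q => q ⨯₃ p₃))
  have rot : ∀ v p q : Fin 3 → ℝ, v ⬝ᵥ (p ⨯₃ q) = (v ⨯₃ p) ⬝ᵥ q := by
    intro v p q; simp [dotProduct, Fin.sum_univ_three, cross_apply]; ring
  have rot' : ∀ v p q : Fin 3 → ℝ, v ⬝ᵥ (q ⨯₃ p) = (p ⨯₃ v) ⬝ᵥ q := by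
    intro v p q; simp [dotProduct, Fin.sum_univ_three, cross_apply]; ring
  have hGmem : ∀ P : (Fin 3 → ℝ) → Prop, (∀ g ∈ G, P g) ↔
      (∀ q ∈ S, q ≠ p₁ → P q) ∧ (∀ q ∈ S, q ≠ p₂ → P (p₂ ⨯₃ q)) ∧
        (∀ q ∈ S, q ≠ p₃ → P (q ⨯₃ p₃)) := by
    intro P
    simp only [G, Finset.forall_mem_union, Finset.forall_mem_image, Finset.mem_erase]
    exact ⟨fun ⟨a, b, c⟩ => ⟨fun q hq hn => a q ⟨hn, hq⟩, fun q hq hn => b ⟨hn, hq⟩,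
        fun q hq hn => c ⟨hn, hq⟩⟩,
      fun ⟨a, b, c⟩ => ⟨fun q hq => a q hq.2 hq.1, fun q hq => b q hq.2 hq.1,
        fun q hq => c q hq.2 hq.1⟩⟩
  -- a tight constraint at a vector `v` with `φ(v) ≤ 0` makes `S` flush
  have strict : ∀ v : Fin 3 → ℝ, 0 < v ⬝ᵥ v → v ⬝ᵥ p₁ = 0 → (∀ g ∈ G, 0 ≤ v ⬝ᵥ g) →
      (v ⬝ᵥ p₂) * (v ⬝ᵥ p₃) ≤ (p₂ ⬝ᵥ p₃) * (v ⬝ᵥ v) → ∀ g ∈ G, 0 < v ⬝ᵥ g := by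
    intro v hv hv₁ hvG hvφ
    have hvG' := hvG
    rw [hGmem] at hvG'
    obtain ⟨ga, gb, gc⟩ := hvG'
    have va : ∀ q ∈ S, 0 ≤ v ⬝ᵥ q := by
      intro q hq
      by_cases hqp : q = p₁
      · rw [hqp, hv₁]
      · exact ga q hq hqp
    have vb : ∀ q ∈ S, 0 ≤ (v ⨯₃ p₂) ⬝ᵥ q := by
      intro q hq
      by_cases hqp : q = p₂
      · rw [hqp, ← rot]; simp
      · rw [← rot]; exact gb q hq hqp
    have vc : ∀ q ∈ S, 0 ≤ (p₃ ⨯₃ v) ⬝ᵥ q := by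
      intro q hq
      by_cases hqp : q = p₃
      · rw [hqp, ← rot']; simp
      · rw [← rot']; exact gc q hq hqp
    obtain ⟨f₁, f₂⟩ := frames_of_arc hS hdot hs hs' hne h₁ h₂ h₃ hv hv₁ va vb vc hvφ
    rw [hGmem]
    refine ⟨fun q hq hqp => lt_of_le_of_ne (va q hq) fun h0 => hS ?_,
      fun q hq hqp => ?_, fun q hq hqp => ?_⟩
    · exact ⟨_, _, f₂, q, hq, p₁, h₁, hqp, h0.symm, hv₁⟩
    · rw [rot]
      refine lt_of_le_of_ne (vb q hq) fun h0 => hS ?_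
      exact ⟨_, _, f₁, q, hq, p₂, h₂, hqp, h0.symm, by rw [← rot]; simp⟩
    · rw [rot']
      refine lt_of_le_of_ne (vc q hq) fun h0 => hS ?_
      exact ⟨_, _, f₂.cyc, q, hq, p₃, h₃, hqp, h0.symm, by rw [← rot']; simp⟩
  have hG : G.Nonempty := by
    have : ∃ q ∈ S, q ≠ p₁ := by
      by_cases hsp : s = p₁
      · exact ⟨s', hs', fun h' => hne (hsp.trans h'.symm)⟩
      · exact ⟨s, hs, hsp⟩
    obtain ⟨q, hq, hqp⟩ := this
    exact ⟨q, Finset.mem_union_left _ (Finset.mem_erase.2 ⟨hqp, hq⟩)⟩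
  have hu0 : ∀ g ∈ G, 0 < u ⬝ᵥ g := by
    refine strict u h.posx hu₁ ?_ hφ
    rw [hGmem]
    refine ⟨fun q hq _ => h.nonnegx q hq, fun q hq _ => ?_, fun q hq _ => ?_⟩
    · rw [rot]; exact hb q hq
    · rw [rot']; exact hc q hq
  have hp₁ := hdot p₁ h₁ p₁ h₁
  -- at an extreme ray `strict` fails, so the quadratic inequality must be reversed there
  have push : ∀ w : Fin 3 → ℝ, 0 < w ⬝ᵥ w → u ⬝ᵥ w = 0 → w ⬝ᵥ p₁ = 0 →
      ∃ κ : ℝ, 0 ≤ (κ • u + w) ⬝ᵥ p₂ ∧ 0 ≤ (κ • u + w) ⬝ᵥ p₃ ∧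
        (p₂ ⬝ᵥ p₃) * ((κ • u + w) ⬝ᵥ (κ • u + w))
          < ((κ • u + w) ⬝ᵥ p₂) * ((κ • u + w) ⬝ᵥ p₃) := by
    intro w hw huw hw₁
    obtain ⟨κ, hκ, g, hg, hg0⟩ := exists_extreme hG hu0 w
    have hv₁ : (κ • u + w) ⬝ᵥ p₁ = 0 := by
      rw [add_dotProduct, smul_dotProduct, hu₁, hw₁]; simp
    have va : ∀ q ∈ S, 0 ≤ (κ • u + w) ⬝ᵥ q := by
      intro q hq
      by_cases hqp : q = p₁
      · rw [hqp, hv₁]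
      · exact ((hGmem _).1 hκ).1 q hq hqp
    refine ⟨κ, va p₂ h₂, va p₃ h₃, ?_⟩
    by_contra hcon
    have hv : 0 < (κ • u + w) ⬝ᵥ (κ • u + w) := by
      have e : (κ • u + w) ⬝ᵥ (κ • u + w) = κ ^ 2 * (u ⬝ᵥ u) + w ⬝ᵥ w := by
        simp [add_dotProduct, dotProduct_add, dotProduct_comm w u, huw]; ring
      rw [e]
      have := h.posx
      positivity
    exact (strict _ hv hv₁ hκ (not_lt.1 hcon) g hg).ne' hg0
  have hw : 0 < (p₁ ⨯₃ u) ⬝ᵥ (p₁ ⨯₃ u) := by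
    rw [cross_dot_self, dotProduct_comm p₁ u, hu₁]
    have := mul_pos hp₁ h.posx
    linarith
  obtain ⟨κ, a₂, a₃, aφ⟩ := push (p₁ ⨯₃ u) hw (by simp) (by rw [dotProduct_comm]; simp)
  obtain ⟨μ, b₂, b₃, bφ⟩ := push (-(p₁ ⨯₃ u)) (by rwa [neg_dotProduct, dotProduct_neg, neg_neg])
    (by rw [dotProduct_neg]; simp)
    (by rw [neg_dotProduct, dotProduct_comm]; simp)
  have := oval_add (hdot p₂ h₂ p₃ h₃).le a₂ a₃ b₂ b₃ aφ bφ
  have e : κ • u + p₁ ⨯₃ u + (μ • u + -(p₁ ⨯₃ u)) = (κ + μ) • u := by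
    rw [add_smul]; abel
  rw [e] at this
  simp only [smul_dotProduct, dotProduct_smul, smul_eq_mul] at this
  nlinarith [mul_le_mul_of_nonneg_left hφ (sq_nonneg (κ + μ))]

/-! ### Passing between frames and rotations -/

/-- The normalised vectors of a frame are the rows of a rotation mapping `S` into `𝕋`. -/
lemma exists_rotation {x y : Fin 3 → ℝ} (hunit : ∀ q ∈ S, q ⬝ᵥ q = 1) (h : Frame S x y) :
    ∃ Q ∈ Matrix.specialOrthogonalGroup (Fin 3) ℝ, (∀ q ∈ S, Q.mulVec q ∈ sphT) ∧
      ∀ q, x ⬝ᵥ q = 0 → Q.mulVec q 0 = 0 := by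
  have nx := Real.sqrt_pos.2 h.posx
  have ny := Real.sqrt_pos.2 h.posy
  have sx := Real.sq_sqrt h.posx.le
  have sy := Real.sq_sqrt h.posy.le
  set a := √(x ⬝ᵥ x)
  set b := √(y ⬝ᵥ y)
  let X := a⁻¹ • x
  let Y := b⁻¹ • y
  have hX : X ⬝ᵥ X = 1 := by
    simp only [X, smul_dotProduct, dotProduct_smul, smul_eq_mul, ← sx]; field_simp
  have hY : Y ⬝ᵥ Y = 1 := by
    simp only [Y, smul_dotProduct, dotProduct_smul, smul_eq_mul, ← sy]; field_simp
  have hXY : X ⬝ᵥ Y = 0 := by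
    simp only [X, Y, smul_dotProduct, dotProduct_smul, smul_eq_mul, h.orth]; simp
  have hZ : (X ⨯₃ Y) ⬝ᵥ (X ⨯₃ Y) = 1 := by rw [cross_dot_self, hX, hY, hXY]; norm_num
  have hZ' : X ⨯₃ Y = (a⁻¹ * b⁻¹) • (x ⨯₃ y) := by
    simp [X, Y, smul_smul, mul_comm]
  let Q : Matrix (Fin 3) (Fin 3) ℝ := Matrix.of ![X, Y, X ⨯₃ Y]
  have hQ : Q * Qᵀ = 1 := by
    ext i j
    have : (Q * Qᵀ) i j = Q i ⬝ᵥ Q j := rfl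
    rw [this]
    have q₀ : Q 0 = X := rfl
    have q₁ : Q 1 = Y := rfl
    have q₂ : Q 2 = X ⨯₃ Y := rfl
    have hYX : Y ⬝ᵥ X = 0 := by rw [dotProduct_comm]; exact hXY
    fin_cases i <;> fin_cases j <;>
      simp [q₀, q₁, q₂, hX, hY, hXY, hYX, hZ, dotProduct_comm (X ⨯₃ Y) X,
        dotProduct_comm (X ⨯₃ Y) Y]
  have hdet : Q.det = 1 := by
    have : Q.det = (X ⨯₃ Y) ⬝ᵥ (X ⨯₃ Y) := by
      simp [Q, Matrix.det_fin_three, dotProduct, Fin.sum_univ_three, cross_apply]; ring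
    rw [this, hZ]
  have hQ' : Qᵀ * Q = 1 := mul_eq_one_comm.1 hQ
  refine ⟨Q, ?_, fun q hq => ⟨?_, fun k => ?_⟩, fun q hq => ?_⟩
  · rw [Matrix.mem_specialOrthogonalGroup_iff, Matrix.mem_orthogonalGroup_iff]
    exact ⟨hQ, hdet⟩
  · rw [dotProduct_mulVec, vecMul_mulVec, ← dotProduct_mulVec, hQ', one_mulVec, hunit q hq]
  · have ex := h.nonnegx q hq
    have ey := h.nonnegy q hq
    have ez := h.nonnegz q hq
    change 0 ≤ Q k ⬝ᵥ q
    fin_cases k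
    · change 0 ≤ X ⬝ᵥ q
      simp only [X, smul_dotProduct, smul_eq_mul]; positivity
    · change 0 ≤ Y ⬝ᵥ q
      simp only [Y, smul_dotProduct, smul_eq_mul]; positivity
    · change 0 ≤ (X ⨯₃ Y) ⬝ᵥ q
      rw [hZ', smul_dotProduct, smul_eq_mul]; positivity
  · change X ⬝ᵥ q = 0
    simp [X, hq]

end

theorem fits_with_two_vertices_on_an_edge
    (S : Finset (Fin 3 → ℝ)) (hS : ∀ x ∈ S, x ⬝ᵥ x = 1)
    (hcard : ∃ s ∈ S, ∃ s' ∈ S, s ≠ s')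
    (Q : Matrix (Fin 3) (Fin 3) ℝ) (hQ : Q ∈ Matrix.specialOrthogonalGroup (Fin 3) ℝ)
    (hmap : ∀ x ∈ S, Q.mulVec x ∈ sphT) :
    ∃ Q' ∈ Matrix.specialOrthogonalGroup (Fin 3) ℝ,
      (∀ x ∈ S, Q'.mulVec x ∈ sphT) ∧
      ∃ s ∈ S, ∃ s' ∈ S, s ≠ s' ∧
        ∃ k : Fin 3, Q'.mulVec s k = 0 ∧ Q'.mulVec s' k = 0 := by
  suffices hF : Flush S by
    obtain ⟨x, y, h, s, hs, s', hs', hne, h0, h0'⟩ := hF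
    obtain ⟨Q', hQ', hm, hz⟩ := exists_rotation hS h
    exact ⟨Q', hQ', hm, s, hs, s', hs', hne, 0, hz s h0, hz s' h0'⟩
  obtain ⟨s, hs, s', hs', hne⟩ := hcard
  rw [Matrix.mem_specialOrthogonalGroup_iff, Matrix.mem_orthogonalGroup_iff] at hQ
  obtain ⟨hQ, hdet⟩ := hQ
  have hQrow : ∀ i j, Q i ⬝ᵥ Q j = (1 : Matrix (Fin 3) (Fin 3) ℝ) i j := by
    intro i j; rw [← hQ]; rfl
  have hnn : ∀ q ∈ S, ∀ k, 0 ≤ Q k ⬝ᵥ q := fun q hq k => (hmap q hq).2 k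
  have h00 : Q 0 ⬝ᵥ Q 0 = 1 := by simp [hQrow]
  have h11 : Q 1 ⬝ᵥ Q 1 = 1 := by simp [hQrow]
  have h01 : Q 0 ⬝ᵥ Q 1 = 0 := by simp [hQrow]
  have h02 : Q 0 ⬝ᵥ Q 2 = 0 := by simp [hQrow]
  have h12 : Q 1 ⬝ᵥ Q 2 = 0 := by simp [hQrow]
  have hd : (Q 0 ⨯₃ Q 1) ⬝ᵥ Q 2 = 1 := by
    rw [← hdet, Matrix.det_fin_three]
    simp [dotProduct, Fin.sum_univ_three, cross_apply]; ring
  have h22 : Q 2 ⬝ᵥ Q 2 = 1 := by simp [hQrow]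
  have hz : Q 0 ⨯₃ Q 1 = Q 2 := by
    rw [← sub_eq_zero, ← dotProduct_self_eq_zero]
    rw [sub_dotProduct, dotProduct_sub, dotProduct_sub, cross_dot_self, h00, h11, h01,
      dotProduct_comm (Q 2) (Q 0 ⨯₃ Q 1), hd, h22]
    norm_num
  have h : Frame S (Q 0) (Q 1) := ⟨by rw [h00]; norm_num, by rw [h11]; norm_num, h01,
    fun q hq => hnn q hq 0, fun q hq => hnn q hq 1, fun q hq => by rw [hz]; exact hnn q hq 2⟩
  by_contra hFl
  have other : ∀ p, ∃ t ∈ S, t ≠ p := by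
    intro p
    by_cases hsp : s = p
    · exact ⟨s', hs', fun h' => hne (hsp.trans h'.symm)⟩
    · exact ⟨s, hs, hsp⟩
  have nv : ∀ {x y : Fin 3 → ℝ}, Frame S x y → ∀ p ∈ S, ¬ (x ⬝ᵥ p = 0 ∧ y ⬝ᵥ p = 0) := by
    intro x y hf p hp
    obtain ⟨t, ht, htp⟩ := other p
    exact hf.not_vertex hFl hp ht htp
  -- orthogonal points of `𝕋` have disjoint supports, so one of them is a vertex
  have hdot : ∀ p ∈ S, ∀ q ∈ S, 0 < p ⬝ᵥ q := by
    intro p hp q hq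
    have e := h.parseval p q
    rw [h00, h11] at e
    have c := h.cyc
    have c' := c.cyc
    have t₀ := mul_nonneg (h.nonnegx p hp) (h.nonnegx q hq)
    have t₁ := mul_nonneg (h.nonnegy p hp) (h.nonnegy q hq)
    have t₂ := mul_nonneg (h.nonnegz p hp) (h.nonnegz q hq)
    by_contra hcon
    have z₀ : (Q 0 ⬝ᵥ p) * (Q 0 ⬝ᵥ q) = 0 := by linarith
    have z₁ : (Q 1 ⬝ᵥ p) * (Q 1 ⬝ᵥ q) = 0 := by linarith
    have z₂ : ((Q 0 ⨯₃ Q 1) ⬝ᵥ p) * ((Q 0 ⨯₃ Q 1) ⬝ᵥ q) = 0 := by linarith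
    have c₂ : Q 1 ⨯₃ (Q 0 ⨯₃ Q 1) = Q 0 := by
      have e' : Q 1 ⨯₃ (Q 0 ⨯₃ Q 1) = (Q 1 ⬝ᵥ Q 1) • Q 0 - (Q 0 ⬝ᵥ Q 1) • Q 1 := by
        ext i
        fin_cases i <;> simp [dotProduct, Fin.sum_univ_three, cross_apply] <;> ring
      rw [e', h11, h01]; simp
    rw [c₂] at c'
    have a₁ := nv h p hp
    have a₂ := nv h q hq
    have a₃ := nv c p hp
    have a₄ := nv c q hq
    have a₅ := nv c' p hp
    have a₆ := nv c' q hq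
    clear t₀ t₁ t₂ hcon e c c'
    rw [mul_eq_zero] at z₀ z₁ z₂
    generalize Q 0 ⬝ᵥ p = A₀ at *
    generalize Q 0 ⬝ᵥ q = B₀ at *
    generalize Q 1 ⬝ᵥ p = A₁ at *
    generalize Q 1 ⬝ᵥ q = B₁ at *
    generalize (Q 0 ⨯₃ Q 1) ⬝ᵥ p = A₂ at *
    generalize (Q 0 ⨯₃ Q 1) ⬝ᵥ q = B₂ at *
    clear hz hd hdet
    grind
  refine hFl ?_
  by_cases hx : ∃ q ∈ S, Q 0 ⬝ᵥ q = 0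
  · obtain ⟨q, hq, hq0⟩ := hx
    exact flush_of_frame hdot hs hs' hne h hq hq0
  · push Not at hx
    obtain ⟨x', y', h', t, ht, ht0, -⟩ := h.tilt (Finset.Subset.refl S) ⟨s, hs⟩
      (fun q hq => lt_of_le_of_ne (h.nonnegx q hq) (hx q hq).symm)
      (fun q hq hq' => absurd hq hq')
    exact flush_of_frame hdot hs hs' hne h'.cyc ht ht0
end

section
/- Let U = {u₁, …, u_p} ⊆ ℝ³ with p ≥ 2 consist of pairwise linearly independent vectors. Then U is isometrically embeddable into ℝ³≥0 if and only if there exist an orthogonal linear map Q of ℝ³ with Qu ≥ 0 for every u ∈ U, two distinct indices i ≠ j, and a coordinate index k ∈ {1,2,3} such that the k-th coordinate of Qu_i and the k-th coordinate of Qu_j are both zero. -/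
open Matrix

/-!
Only the forward implication needs an argument. After applying the given orthogonal map, all vectors
`u i` are coordinatewise nonnegative, so the standard basis is an orthonormal frame inside the dual
cone `C = {x | ∀ i, 0 ≤ ⟨x, u i⟩}`; what is wanted is an orthonormal frame in `C` with one member
orthogonal to two of the `u i`, i.e. lying on two walls of `C`.

Orthogonality can be relaxed (`solvable_of_triple`): it suffices to find `x, y, z ∈ C` with pairwise
nonpositive inner products, `x` on two walls and `y, z` not parallel to `x`. Indeed, projecting `y`
and `z` to `x⊥` keeps them in `C`, and a quarter of `x⊥` between the two projections gives the rest
of the frame.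

If the `u i` lie in a plane, `x` is a normal of the plane and `y, z` come from two coordinate axes
(`solvable_of_planar`). Otherwise, with `w = ∑ u i`, the slice `⟨x, w⟩ = 1` of `C` is a compact
convex polygon. Its points on two walls are sought by an extremal argument: for small `ε > 0`,
maximise `(ε - ⟨y, z⟩) (ε - ⟨x, z⟩) (ε - ⟨x, y⟩)` over triples in the slice whose pairwise inner
products are at most `ε`. The heart of the proof is that a maximiser has a member on two walls
(`IsOptimal.onTwoWalls`). If not, each member can be moved in both directions along its wall, if any, so the
product is stationary in these directions; this determines the wall directions up to scale in terms
of `x, y, z`. With a suitable choice of the three speeds, all three inner products are stationary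
to first order, and the second-order term of the product is strictly positive, contradicting
maximality. Letting `ε → 0` by compactness gives the required triple
(`exists_triple_onTwoWalls`).
-/

open Filter Topology

/-! ### The slice of the dual cone and its walls -/

/-- The slice `⟨x, w⟩ = 1` of the dual cone of the vectors `u i`. -/
def Section {p : ℕ} (u : Fin p → Fin 3 → ℝ) (w : Fin 3 → ℝ) : Set (Fin 3 → ℝ) :=
  {x | (∀ i, 0 ≤ x ⬝ᵥ u i) ∧ x ⬝ᵥ w = 1}

/-- `x` is orthogonal to two of the vectors `u i` with distinct indices. Membership in the dual cone is
not part of the definition. -/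
def OnTwoWalls {p : ℕ} (u : Fin p → Fin 3 → ℝ) (x : Fin 3 → ℝ) : Prop :=
  ∃ i j, i ≠ j ∧ x ⬝ᵥ u i = 0 ∧ x ⬝ᵥ u j = 0

/-- In the plane `w⊥`, the product of two signed areas as a Gram-type determinant: `w ⨯₃ x` is, up to
scaling by `|w|`, the projection of `x` to `w⊥` turned by a right angle. -/
lemma plane_area (w x y z : Fin 3 → ℝ) :
    (w ⬝ᵥ w) * ((w ⬝ᵥ z ⨯₃ x) * (w ⬝ᵥ x ⨯₃ y)) =
      ((w ⨯₃ x) ⬝ᵥ (w ⨯₃ y)) * ((w ⨯₃ x) ⬝ᵥ (w ⨯₃ z)) -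
      ((w ⨯₃ x) ⬝ᵥ (w ⨯₃ x)) * ((w ⨯₃ y) ⬝ᵥ (w ⨯₃ z)) := by
  simp only [cross_apply, vec3_dotProduct, Matrix.cons_val]
  ring

/-- The barycentric relation `D₁ x' + D₂ y' + D₃ z' = 0` between three vectors of the plane `w⊥`, paired
with `x'`; here `x' = w ⨯₃ x`, and similarly for `y'` and `z'`. -/
lemma plane_bary (w x y z : Fin 3 → ℝ) :
    (w ⬝ᵥ y ⨯₃ z) * ((w ⨯₃ x) ⬝ᵥ (w ⨯₃ x)) + (w ⬝ᵥ z ⨯₃ x) * ((w ⨯₃ x) ⬝ᵥ (w ⨯₃ y))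
      + (w ⬝ᵥ x ⨯₃ y) * ((w ⨯₃ x) ⬝ᵥ (w ⨯₃ z)) = 0 := by
  simp only [cross_apply, vec3_dotProduct, Matrix.cons_val]
  ring

/-- A point of the slice can be moved a little in both directions along a vector parallel to the slice
and to all the walls through the point. -/
lemma move_mem {p : ℕ} {u : Fin p → Fin 3 → ℝ} {w x v : Fin 3 → ℝ}
    (hx : x ∈ Section u w) (hvw : v ⬝ᵥ w = 0) (hv : ∀ i, x ⬝ᵥ u i = 0 → v ⬝ᵥ u i = 0) :
    ∀ᶠ t : ℝ in 𝓝 0, x + t • v ∈ Section u w := by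
  have h : ∀ᶠ t : ℝ in 𝓝 0, ∀ i, 0 ≤ (x + t • v) ⬝ᵥ u i := by
    refine eventually_all.2 fun i => ?_
    rcases (hx.1 i).eq_or_lt with h0 | h0
    · exact Eventually.of_forall fun t => by
        rw [add_dotProduct, smul_dotProduct, hv i h0.symm, ← h0]; simp
    · have hc : ContinuousAt (fun t : ℝ => x ⬝ᵥ u i + t * (v ⬝ᵥ u i)) 0 := by fun_prop
      have := hc.eventually (lt_mem_nhds (a := 0) (by simpa using h0))
      filter_upwards [this] with t ht
      rw [add_dotProduct, smul_dotProduct, smul_eq_mul]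
      exact ht.le
  filter_upwards [h] with t ht
  refine ⟨ht, ?_⟩
  rw [add_dotProduct, smul_dotProduct, hvw, hx.2]; simp

/-! ### A maximiser of the product of gaps has a member on two walls -/

/-- The triple `x, y, z` of the slice maximises the product of the gaps `ε - ⟨·, ·⟩` among triples with
all gaps nonnegative, and its own gaps are strictly positive. -/
structure IsOptimal {p : ℕ} (u : Fin p → Fin 3 → ℝ) (w : Fin 3 → ℝ) (ε : ℝ)
    (x y z : Fin 3 → ℝ) : Prop where
  memx : x ∈ Section u w
  memy : y ∈ Section u w
  memz : z ∈ Section u w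
  xy : x ⬝ᵥ y < ε
  xz : x ⬝ᵥ z < ε
  yz : y ⬝ᵥ z < ε
  max : ∀ x' ∈ Section u w, ∀ y' ∈ Section u w, ∀ z' ∈ Section u w,
    x' ⬝ᵥ y' ≤ ε → x' ⬝ᵥ z' ≤ ε → y' ⬝ᵥ z' ≤ ε →
    (ε - y' ⬝ᵥ z') * (ε - x' ⬝ᵥ z') * (ε - x' ⬝ᵥ y') ≤
      (ε - y ⬝ᵥ z) * (ε - x ⬝ᵥ z) * (ε - x ⬝ᵥ y)

/-- The problem is symmetric in the three points; a cyclic shift is enough to transfer results about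
the first point to the other two. -/
lemma IsOptimal.rotate {p : ℕ} {u : Fin p → Fin 3 → ℝ} {w : Fin 3 → ℝ} {ε : ℝ}
    {x y z : Fin 3 → ℝ} (h : IsOptimal u w ε x y z) : IsOptimal u w ε y z x where
  memx := h.memy
  memy := h.memz
  memz := h.memx
  xy := h.yz
  xz := by rw [dotProduct_comm]; exact h.xy
  yz := by rw [dotProduct_comm]; exact h.xz
  max x' hx y' hy z' hz h1 h2 h3 := by
    have := h.max z' hz x' hx y' hy (by rwa [dotProduct_comm]) (by rwa [dotProduct_comm]) h1
    rw [dotProduct_comm z x, dotProduct_comm y x, dotProduct_comm y' z', dotProduct_comm x' z']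
    linarith

/-- First-order condition at `x`: if `x` is on exactly one wall, the product of gaps is stationary along
it, so the wall is parallel to the vector `w ⨯₃ (p₂ y + p₃ z)`, where `p₂`, `p₃` are the gaps of the
pairs `x, z` and `x, y`. -/
lemma IsOptimal.stationary {p : ℕ} {u : Fin p → Fin 3 → ℝ} {w : Fin 3 → ℝ} {ε : ℝ}
    {x y z : Fin 3 → ℝ} (h : IsOptimal u w ε x y z) (hx : ¬ OnTwoWalls u x) (i : Fin p)
    (hi : x ⬝ᵥ u i = 0) :
    (w ⨯₃ ((ε - x ⬝ᵥ z) • y + (ε - x ⬝ᵥ y) • z)) ⬝ᵥ u i = 0 := by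
  -- the direction of the wall within the slice
  set v := w ⨯₃ u i with hv
  have hvw : v ⬝ᵥ w = 0 := by rw [dotProduct_comm, hv, dot_self_cross]
  have hmem := move_mem h.memx hvw (fun j hj => by
    have : j = i := by
      by_contra hne
      exact hx ⟨j, i, hne, hj, hi⟩
    rw [this, dotProduct_comm, hv, dot_cross_self])
  have hxy : ContinuousAt (fun t : ℝ => x ⬝ᵥ y + t * (v ⬝ᵥ y)) 0 := by fun_prop
  have hxz : ContinuousAt (fun t : ℝ => x ⬝ᵥ z + t * (v ⬝ᵥ z)) 0 := by fun_prop
  have hmax : IsLocalMax (fun t : ℝ => (ε - y ⬝ᵥ z) * (ε - (x ⬝ᵥ z + t * (v ⬝ᵥ z))) *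
      (ε - (x ⬝ᵥ y + t * (v ⬝ᵥ y)))) 0 := by
    filter_upwards [hmem, hxy.eventually_lt continuousAt_const (by simpa using h.xy),
      hxz.eventually_lt continuousAt_const (by simpa using h.xz)] with t ht h1 h2
    have := h.max _ ht y h.memy z h.memz
    simp only [add_dotProduct, smul_dotProduct, smul_eq_mul] at this
    simpa using this h1.le h2.le h.yz.le
  have hd : HasDerivAt (fun t : ℝ => (ε - y ⬝ᵥ z) * (ε - (x ⬝ᵥ z + t * (v ⬝ᵥ z))) *
      (ε - (x ⬝ᵥ y + t * (v ⬝ᵥ y))))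
      (((ε - y ⬝ᵥ z) * (-(1 * (v ⬝ᵥ z)))) * (ε - (x ⬝ᵥ y + 0 * (v ⬝ᵥ y))) +
        ((ε - y ⬝ᵥ z) * (ε - (x ⬝ᵥ z + 0 * (v ⬝ᵥ z)))) * (-(1 * (v ⬝ᵥ y)))) 0 :=
    (((((hasDerivAt_id (0 : ℝ)).mul_const _).const_add _).const_sub ε).const_mul _).mul
      ((((hasDerivAt_id (0 : ℝ)).mul_const _).const_add _).const_sub ε)
  have h0 := hmax.hasDerivAt_eq_zero hd
  have hp : ε - y ⬝ᵥ z ≠ 0 := (sub_pos.2 h.yz).ne'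
  have h1 : (ε - x ⬝ᵥ z) * (v ⬝ᵥ y) + (ε - x ⬝ᵥ y) * (v ⬝ᵥ z) = 0 :=
    mul_left_cancel₀ hp (by linear_combination -h0)
  have anti : ∀ s : Fin 3 → ℝ, (w ⨯₃ s) ⬝ᵥ u i = -(v ⬝ᵥ s) := fun s => by
    simp only [hv, cross_apply, vec3_dotProduct, Matrix.cons_val]
    ring
  rw [anti, dotProduct_add, dotProduct_smul, dotProduct_smul, smul_eq_mul, smul_eq_mul, h1, neg_zero]

/-- Second-order condition for a product whose factors have no first-order term. -/
lemma second_order {a b c A B C : ℝ}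
    (h : ∀ᶠ t : ℝ in 𝓝 0, (a + t ^ 2 * A) * (b + t ^ 2 * B) * (c + t ^ 2 * C) ≤ a * b * c) :
    A * b * c + a * B * c + a * b * C ≤ 0 := by
  by_contra! hpos
  have hc : ContinuousAt (fun t : ℝ => A * b * c + a * B * c + a * b * C +
      t ^ 2 * (A * B * c + A * b * C + a * B * C) + t ^ 4 * (A * B * C)) 0 := by fun_prop
  have hev := hc.eventually (lt_mem_nhds (a := 0) (by simpa using hpos))
  have h2 : ∀ᶠ t : ℝ in 𝓝[≠] 0, False := by
    filter_upwards [h.filter_mono nhdsWithin_le_nhds, hev.filter_mono nhdsWithin_le_nhds,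
      self_mem_nhdsWithin] with t h1 h2 h3
    have : 0 < t ^ 2 := by have : t ≠ 0 := h3; positivity
    nlinarith [mul_pos this h2]
  exact h2.exists.elim fun _ => id

set_option maxHeartbeats 400000 in
/-- The bound on `ε` makes the projections of `x, y, z` to `w⊥` have pairwise negative inner products.
The origin is then inside their triangle, so the signed areas `D₁, D₂, D₃` of the three subtriangles
have the same sign. -/
lemma IsOptimal.onTwoWalls {p : ℕ} {u : Fin p → Fin 3 → ℝ} {w : Fin 3 → ℝ} {ε : ℝ}
    {x y z : Fin 3 → ℝ} (hw : 0 < w ⬝ᵥ w) (hε : (w ⬝ᵥ w) * ε < 1) (h : IsOptimal u w ε x y z) :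
    OnTwoWalls u x ∨ OnTwoWalls u y ∨ OnTwoWalls u z := by
  by_contra! hno
  obtain ⟨hx, hy, hz⟩ := hno
  have sx := h.stationary hx
  have sy := h.rotate.stationary hy
  have sz := h.rotate.rotate.stationary hz
  have hxy := h.xy
  have hxz := h.xz
  have hyz := h.yz
  have S : ∀ a b : Fin 3 → ℝ, a ⬝ᵥ w = 1 → b ⬝ᵥ w = 1 → a ⬝ᵥ b < ε →
      (w ⨯₃ a) ⬝ᵥ (w ⨯₃ b) < 0 := fun a b ha hb hab => by
    rw [cross_dot_cross, ha, dotProduct_comm w b, hb]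
    nlinarith
  have Sxy := S x y h.memx.2 h.memy.2 hxy
  have Sxz := S x z h.memx.2 h.memz.2 hxz
  have Syz := S y z h.memy.2 h.memz.2 hyz
  have Sxx : 0 ≤ (w ⨯₃ x) ⬝ᵥ (w ⨯₃ x) := by simpa using dotProduct_star_self_nonneg (w ⨯₃ x)
  have Syy : 0 ≤ (w ⨯₃ y) ⬝ᵥ (w ⨯₃ y) := by simpa using dotProduct_star_self_nonneg (w ⨯₃ y)
  have Szz : 0 ≤ (w ⨯₃ z) ⬝ᵥ (w ⨯₃ z) := by simpa using dotProduct_star_self_nonneg (w ⨯₃ z)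
  have a1 := plane_area w x y z
  have a2 := plane_area w y z x
  have a3 := plane_area w z x y
  have b1 := plane_bary w x y z
  have b2 := plane_bary w y z x
  have b3 := plane_bary w z x y
  rw [dotProduct_comm (w ⨯₃ y) (w ⨯₃ x)] at a2 b2
  rw [dotProduct_comm (w ⨯₃ z) (w ⨯₃ x)] at a2 a3 b3
  rw [dotProduct_comm (w ⨯₃ z) (w ⨯₃ y)] at a3 b3
  rw [dotProduct_comm y x] at sy
  rw [dotProduct_comm z x, dotProduct_comm z y] at sz
  have w1 : (w ⨯₃ z) ⬝ᵥ y = -(w ⬝ᵥ y ⨯₃ z) := by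
    simp only [cross_apply, vec3_dotProduct, Matrix.cons_val]; ring
  have w1' : (w ⨯₃ y) ⬝ᵥ z = w ⬝ᵥ y ⨯₃ z := by
    simp only [cross_apply, vec3_dotProduct, Matrix.cons_val]; ring
  have w2 : (w ⨯₃ x) ⬝ᵥ z = -(w ⬝ᵥ z ⨯₃ x) := by
    simp only [cross_apply, vec3_dotProduct, Matrix.cons_val]; ring
  have w2' : (w ⨯₃ z) ⬝ᵥ x = w ⬝ᵥ z ⨯₃ x := by
    simp only [cross_apply, vec3_dotProduct, Matrix.cons_val]; ring
  have w3 : (w ⨯₃ y) ⬝ᵥ x = -(w ⬝ᵥ x ⨯₃ y) := by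
    simp only [cross_apply, vec3_dotProduct, Matrix.cons_val]; ring
  have w3' : (w ⨯₃ x) ⬝ᵥ y = w ⬝ᵥ x ⨯₃ y := by
    simp only [cross_apply, vec3_dotProduct, Matrix.cons_val]; ring
  have z1 : (w ⨯₃ x) ⬝ᵥ x = 0 := by rw [dotProduct_comm, dot_cross_self]
  have z2 : (w ⨯₃ y) ⬝ᵥ y = 0 := by rw [dotProduct_comm, dot_cross_self]
  have z3 : (w ⨯₃ z) ⬝ᵥ z = 0 := by rw [dotProduct_comm, dot_cross_self]
  set D1 := w ⬝ᵥ y ⨯₃ z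
  set D2 := w ⬝ᵥ z ⨯₃ x
  set D3 := w ⬝ᵥ x ⨯₃ y
  -- the three areas have the same sign
  have D23 : 0 < D2 * D3 := pos_of_mul_pos_right
    (by linarith [mul_pos_of_neg_of_neg Sxy Sxz,
      mul_nonpos_of_nonneg_of_nonpos Sxx Syz.le]) hw.le
  have D31 : 0 < D3 * D1 := pos_of_mul_pos_right
    (by linarith [mul_pos_of_neg_of_neg Sxy Syz,
      mul_nonpos_of_nonneg_of_nonpos Syy Sxz.le]) hw.le
  have D12 : 0 < D1 * D2 := pos_of_mul_pos_right
    (by linarith [mul_pos_of_neg_of_neg Sxz Syz,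
      mul_nonpos_of_nonneg_of_nonpos Szz Sxy.le]) hw.le
  set p1 := ε - y ⬝ᵥ z with hp1
  set p2 := ε - x ⬝ᵥ z with hp2
  set p3 := ε - x ⬝ᵥ y with hp3
  have p1pos : 0 < p1 := sub_pos.2 hyz
  have p2pos : 0 < p2 := sub_pos.2 hxz
  have p3pos : 0 < p3 := sub_pos.2 hxy
  -- the speeds along the walls are chosen so that all three inner products are stationary
  obtain ⟨α, hα⟩ : ∃ α, α = (D2 * D3) • (w ⨯₃ (p2 • y + p3 • z)) := ⟨_, rfl⟩
  obtain ⟨β, hβ⟩ : ∃ β, β = (D3 * D1) • (w ⨯₃ (p3 • z + p1 • x)) := ⟨_, rfl⟩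
  obtain ⟨γ, hγ⟩ : ∃ γ, γ = (D1 * D2) • (w ⨯₃ (p1 • x + p2 • y)) := ⟨_, rfl⟩
  have mα : ∀ᶠ t : ℝ in 𝓝 0, x + t • α ∈ Section u w := move_mem h.memx
    (by rw [hα, smul_dotProduct, dotProduct_comm, dot_self_cross, smul_zero])
    (fun i hi => by rw [hα, smul_dotProduct, sx i hi, smul_zero])
  have mβ : ∀ᶠ t : ℝ in 𝓝 0, y + t • β ∈ Section u w := move_mem h.memy
    (by rw [hβ, smul_dotProduct, dotProduct_comm, dot_self_cross, smul_zero])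
    (fun i hi => by rw [hβ, smul_dotProduct, sy i hi, smul_zero])
  have mγ : ∀ᶠ t : ℝ in 𝓝 0, z + t • γ ∈ Section u w := move_mem h.memz
    (by rw [hγ, smul_dotProduct, dotProduct_comm, dot_self_cross, smul_zero])
    (fun i hi => by rw [hγ, smul_dotProduct, sz i hi, smul_zero])
  have fxy : α ⬝ᵥ y + x ⬝ᵥ β = 0 := by
    rw [dotProduct_comm x β, hα, hβ]
    simp only [map_add, map_smul, smul_dotProduct, add_dotProduct, smul_eq_mul, w1, w2', z1, z2]
    ring
  have fxz : α ⬝ᵥ z + x ⬝ᵥ γ = 0 := by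
    rw [dotProduct_comm x γ, hα, hγ]
    simp only [map_add, map_smul, smul_dotProduct, add_dotProduct, smul_eq_mul, w1', w3, z1, z3]
    ring
  have fyz : β ⬝ᵥ z + y ⬝ᵥ γ = 0 := by
    rw [dotProduct_comm y γ, hβ, hγ]
    simp only [map_add, map_smul, smul_dotProduct, add_dotProduct, smul_eq_mul, w2, w3', z2, z3]
    ring
  have expand : ∀ (a b c d : Fin 3 → ℝ), a ⬝ᵥ d + c ⬝ᵥ b = 0 → ∀ t : ℝ,
      ε - (c + t • a) ⬝ᵥ (d + t • b) = (ε - c ⬝ᵥ d) + t ^ 2 * (-(a ⬝ᵥ b)) := fun a b c d h0 t => by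
    simp only [add_dotProduct, dotProduct_add, smul_dotProduct, dotProduct_smul, smul_eq_mul]
    linear_combination -t * h0
  have nonneg_near : ∀ a A : ℝ, 0 < a → ∀ᶠ t : ℝ in 𝓝 0, 0 ≤ a + t ^ 2 * A := fun a A ha => by
    have hc : ContinuousAt (fun t : ℝ => a + t ^ 2 * A) 0 := by fun_prop
    exact (hc.eventually (lt_mem_nhds (a := 0) (by simpa using ha))).mono fun _ h => h.le
  have hle : ∀ᶠ t : ℝ in 𝓝 0, (p1 + t ^ 2 * (-(β ⬝ᵥ γ))) * (p2 + t ^ 2 * (-(α ⬝ᵥ γ))) *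
      (p3 + t ^ 2 * (-(α ⬝ᵥ β))) ≤ p1 * p2 * p3 := by
    filter_upwards [mα, mβ, mγ, nonneg_near p1 (-(β ⬝ᵥ γ)) p1pos,
      nonneg_near p2 (-(α ⬝ᵥ γ)) p2pos, nonneg_near p3 (-(α ⬝ᵥ β)) p3pos] with t h1 h2 h3 h4 h5 h6
    have e1 := expand _ _ _ _ fyz t
    have e2 := expand _ _ _ _ fxz t
    have e3 := expand _ _ _ _ fxy t
    rw [hp1, ← e1, hp2, ← e2, hp3, ← e3]
    rw [hp1, ← e1] at h4
    rw [hp2, ← e2] at h5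
    rw [hp3, ← e3] at h6
    exact h.max _ h1 _ h2 _ h3 (sub_nonneg.1 h6) (sub_nonneg.1 h5) (sub_nonneg.1 h4)
  have hso := second_order hle
  -- the mixed terms cancel by the barycentric relations, leaving a sum of three positive terms
  have key : -(β ⬝ᵥ γ) * p2 * p3 + p1 * (-(α ⬝ᵥ γ)) * p3 + p1 * p2 * (-(α ⬝ᵥ β)) =
      -((D1 * D2) * D3 ^ 2 * (p1 * p2) ^ 2 * ((w ⨯₃ x) ⬝ᵥ (w ⨯₃ y)) +
        (D1 * D2) * (D3 * D2) * (p1 * p3) ^ 2 * ((w ⨯₃ x) ⬝ᵥ (w ⨯₃ z)) +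
        (D2 * D3) * D1 ^ 2 * (p2 * p3) ^ 2 * ((w ⨯₃ y) ⬝ᵥ (w ⨯₃ z))) := by
    rw [hα, hβ, hγ]
    simp only [map_add, map_smul, smul_dotProduct, add_dotProduct, dotProduct_add, dotProduct_smul,
      smul_eq_mul, dotProduct_comm (w ⨯₃ y) (w ⨯₃ x), dotProduct_comm (w ⨯₃ z) (w ⨯₃ x),
      dotProduct_comm (w ⨯₃ z) (w ⨯₃ y)]
    linear_combination (-D1 * D2 * D3 * p1 * p2 * p3) * (p1 * b1 + p2 * b2 + p3 * b3)
  rw [key] at hso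
  have D3sq : 0 < D3 ^ 2 := by
    have : D3 ≠ 0 := right_ne_zero_of_mul D23.ne'
    positivity
  have D1sq : 0 < D1 ^ 2 := by
    have : D1 ≠ 0 := right_ne_zero_of_mul D31.ne'
    positivity
  have t1 := mul_neg_of_pos_of_neg (show 0 < (D1 * D2) * D3 ^ 2 * (p1 * p2) ^ 2 by positivity) Sxy
  have t2 := mul_neg_of_pos_of_neg (show 0 < (D1 * D2) * (D3 * D2) * (p1 * p3) ^ 2 by
    rw [mul_comm D3 D2]; positivity) Sxz
  have t3 := mul_neg_of_pos_of_neg (show 0 < (D2 * D3) * D1 ^ 2 * (p2 * p3) ^ 2 by positivity) Syz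
  linarith

/-! ### Existence of maximisers and the limit `ε → 0` -/

/-- The slice is bounded because each `⟨x, u i⟩` is between `0` and their sum `1`. -/
lemma isCompact_section {p : ℕ} {u : Fin p → Fin 3 → ℝ}
    (hspan : ∀ n : Fin 3 → ℝ, (∀ i, n ⬝ᵥ u i = 0) → n = 0) :
    IsCompact (Section u (∑ i, u i)) := by
  let T : (Fin 3 → ℝ) →ₗ[ℝ] (Fin p → ℝ) := (Matrix.of u).mulVecLin
  have hT : ∀ x i, T x i = x ⬝ᵥ u i := fun x i => by
    simp [T, Matrix.mulVec, dotProduct_comm]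
  have hker : T.ker = ⊥ := by
    refine LinearMap.ker_eq_bot'.2 fun n hn => hspan n fun i => ?_
    rw [← hT, hn]; rfl
  have hcpt : IsCompact (T ⁻¹' (Set.Icc 0 1)) :=
    (LinearMap.isClosedEmbedding_of_injective hker).isCompact_preimage isCompact_Icc
  refine hcpt.of_isClosed_subset ?_ ?_
  · have e : Section u (∑ i, u i) =
        (⋂ i, {x | 0 ≤ x ⬝ᵥ u i}) ∩ {x | x ⬝ᵥ (∑ i, u i) = 1} := by
      ext x; simp [Section]
    rw [e]
    refine (isClosed_iInter fun i => isClosed_le continuous_const ?_).inter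
      (isClosed_eq ?_ continuous_const)
    all_goals exact Continuous.dotProduct continuous_id continuous_const
  · rintro x ⟨hx, h1⟩
    refine ⟨fun i => (hT x i).symm ▸ hx i, fun i => ?_⟩
    rw [hT, Pi.one_apply, ← h1, dotProduct_sum]
    exact Finset.single_le_sum (f := fun i => x ⬝ᵥ u i) (fun j _ => hx j) (Finset.mem_univ i)

/-- The given triple has a positive product of gaps, so the maximum over the compact set of triples with
nonnegative gaps has strictly positive gaps. -/
lemma exists_isOptimal {p : ℕ} {u : Fin p → Fin 3 → ℝ} {w : Fin 3 → ℝ} {ε : ℝ} (hε : 0 < ε)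
    (hc : IsCompact (Section u w)) {x y z : Fin 3 → ℝ}
    (hx : x ∈ Section u w) (hy : y ∈ Section u w) (hz : z ∈ Section u w)
    (hxy : x ⬝ᵥ y ≤ 0) (hxz : x ⬝ᵥ z ≤ 0) (hyz : y ⬝ᵥ z ≤ 0) :
    ∃ x y z, IsOptimal u w ε x y z := by
  let V := Fin 3 → ℝ
  let K : Set (V × V × V) := (Section u w ×ˢ Section u w ×ˢ Section u w) ∩
    {q | q.1 ⬝ᵥ q.2.1 ≤ ε ∧ q.1 ⬝ᵥ q.2.2 ≤ ε ∧ q.2.1 ⬝ᵥ q.2.2 ≤ ε}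
  have c1 : Continuous fun q : V × V × V => q.1 ⬝ᵥ q.2.1 :=
    continuous_fst.dotProduct (continuous_fst.comp continuous_snd)
  have c2 : Continuous fun q : V × V × V => q.1 ⬝ᵥ q.2.2 :=
    continuous_fst.dotProduct (continuous_snd.comp continuous_snd)
  have c3 : Continuous fun q : V × V × V => q.2.1 ⬝ᵥ q.2.2 :=
    (continuous_fst.comp continuous_snd).dotProduct (continuous_snd.comp continuous_snd)
  have hK : IsCompact K := (hc.prod (hc.prod hc)).inter_right
    ((isClosed_le c1 continuous_const).inter
      ((isClosed_le c2 continuous_const).inter (isClosed_le c3 continuous_const)))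
  have hmem : (x, y, z) ∈ K :=
    ⟨⟨hx, hy, hz⟩, hxy.trans hε.le, hxz.trans hε.le, hyz.trans hε.le⟩
  obtain ⟨⟨a, b, c⟩, ⟨⟨ha, hb, hc'⟩, h1, h2, h3⟩, hmax⟩ := hK.exists_isMaxOn ⟨_, hmem⟩
    (f := fun q : V × V × V => (ε - q.2.1 ⬝ᵥ q.2.2) * (ε - q.1 ⬝ᵥ q.2.2) * (ε - q.1 ⬝ᵥ q.2.1))
    (by fun_prop)
  have hpos : 0 < (ε - b ⬝ᵥ c) * (ε - a ⬝ᵥ c) * (ε - a ⬝ᵥ b) :=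
    lt_of_lt_of_le (mul_pos (mul_pos (by linarith) (by linarith)) (by linarith)) (hmax hmem)
  have n1 := right_ne_zero_of_mul hpos.ne'
  have n2 := right_ne_zero_of_mul (left_ne_zero_of_mul hpos.ne')
  have n3 := left_ne_zero_of_mul (left_ne_zero_of_mul hpos.ne')
  exact ⟨a, b, c, ha, hb, hc', lt_of_le_of_ne h1 fun h => n1 (by rw [h, sub_self]),
    lt_of_le_of_ne h2 fun h => n2 (by rw [h, sub_self]),
    lt_of_le_of_ne h3 fun h => n3 (by rw [h, sub_self]),
    fun x' hx y' hy z' hz g1 g2 g3 => hmax (a := (x', y', z')) ⟨⟨hx, hy, hz⟩, g1, g2, g3⟩⟩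

lemma isClosed_onTwoWalls {p : ℕ} (u : Fin p → Fin 3 → ℝ) : IsClosed {x | OnTwoWalls u x} := by
  have e : {x | OnTwoWalls u x} =
      ⋃ i, ⋃ j, {x | i ≠ j ∧ x ⬝ᵥ u i = 0 ∧ x ⬝ᵥ u j = 0} := by
    ext x; simp [OnTwoWalls]
  rw [e]
  refine isClosed_iUnion_of_finite fun i => isClosed_iUnion_of_finite fun j => ?_
  have c : ∀ i, IsClosed {x : Fin 3 → ℝ | x ⬝ᵥ u i = 0} := fun i =>
    isClosed_eq (Continuous.dotProduct continuous_id continuous_const) continuous_const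
  exact isClosed_const.inter ((c i).inter (c j))

/-- The largest pairwise inner product attains its minimum over the compact set of triples with first
member on two walls; this minimum is at most every small `ε > 0`. -/
lemma exists_triple_onTwoWalls {p : ℕ} {u : Fin p → Fin 3 → ℝ} {w : Fin 3 → ℝ}
    (hw : 0 < w ⬝ᵥ w) (hc : IsCompact (Section u w)) {x y z : Fin 3 → ℝ}
    (hx : x ∈ Section u w) (hy : y ∈ Section u w) (hz : z ∈ Section u w)
    (hxy : x ⬝ᵥ y ≤ 0) (hxz : x ⬝ᵥ z ≤ 0) (hyz : y ⬝ᵥ z ≤ 0) :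
    ∃ x ∈ Section u w, ∃ y ∈ Section u w, ∃ z ∈ Section u w,
      OnTwoWalls u x ∧ x ⬝ᵥ y ≤ 0 ∧ x ⬝ᵥ z ≤ 0 ∧ y ⬝ᵥ z ≤ 0 := by
  have approx : ∀ ε, 0 < ε → (w ⬝ᵥ w) * ε < 1 →
      ∃ x ∈ Section u w, ∃ y ∈ Section u w, ∃ z ∈ Section u w,
        OnTwoWalls u x ∧ x ⬝ᵥ y ≤ ε ∧ x ⬝ᵥ z ≤ ε ∧ y ⬝ᵥ z ≤ ε := fun ε hε hε' => by
    have wrap : ∀ {x y z}, IsOptimal u w ε x y z → OnTwoWalls u x →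
        ∃ x ∈ Section u w, ∃ y ∈ Section u w, ∃ z ∈ Section u w,
          OnTwoWalls u x ∧ x ⬝ᵥ y ≤ ε ∧ x ⬝ᵥ z ≤ ε ∧ y ⬝ᵥ z ≤ ε := fun h hx =>
      ⟨_, h.memx, _, h.memy, _, h.memz, hx, h.xy.le, h.xz.le, h.yz.le⟩
    obtain ⟨a, b, c, h⟩ := exists_isOptimal hε hc hx hy hz hxy hxz hyz
    rcases h.onTwoWalls hw hε' with h1 | h1 | h1
    exacts [wrap h h1, wrap h.rotate h1, wrap h.rotate.rotate h1]
  let V := Fin 3 → ℝ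
  let K : Set (V × V × V) := (Section u w ×ˢ Section u w ×ˢ Section u w) ∩
    {q | OnTwoWalls u q.1}
  have hK : IsCompact K := (hc.prod (hc.prod hc)).inter_right
    ((isClosed_onTwoWalls u).preimage continuous_fst)
  have c1 : Continuous fun q : V × V × V => q.1 ⬝ᵥ q.2.1 :=
    continuous_fst.dotProduct (continuous_fst.comp continuous_snd)
  have c2 : Continuous fun q : V × V × V => q.1 ⬝ᵥ q.2.2 :=
    continuous_fst.dotProduct (continuous_snd.comp continuous_snd)
  have c3 : Continuous fun q : V × V × V => q.2.1 ⬝ᵥ q.2.2 :=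
    (continuous_fst.comp continuous_snd).dotProduct (continuous_snd.comp continuous_snd)
  have small : ∃ ε₀ : ℝ, 0 < ε₀ ∧ ∀ ε ≤ ε₀, (w ⬝ᵥ w) * ε < 1 := by
    refine ⟨(2 * (w ⬝ᵥ w))⁻¹, by positivity, fun ε h => ?_⟩
    have := mul_le_mul_of_nonneg_left h hw.le
    have e : (w ⬝ᵥ w) * (2 * (w ⬝ᵥ w))⁻¹ = 1 / 2 := by field_simp
    linarith
  obtain ⟨ε₀, hε₀, hsmall⟩ := small
  obtain ⟨x₀, hx₀, y₀, hy₀, z₀, hz₀, hv₀, -⟩ := approx ε₀ hε₀ (hsmall _ le_rfl)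
  obtain ⟨⟨a, b, c⟩, ⟨⟨ha, hb, hc'⟩, hv⟩, hmin⟩ := hK.exists_isMinOn
    ⟨(x₀, y₀, z₀), ⟨hx₀, hy₀, hz₀⟩, hv₀⟩
    (f := fun q : V × V × V => max (q.1 ⬝ᵥ q.2.1) (max (q.1 ⬝ᵥ q.2.2) (q.2.1 ⬝ᵥ q.2.2)))
    (by fun_prop)
  have hle : max (a ⬝ᵥ b) (max (a ⬝ᵥ c) (b ⬝ᵥ c)) ≤ 0 := by
    refine le_of_forall_pos_le_add fun ε hε => ?_
    obtain ⟨x₁, hx₁, y₁, hy₁, z₁, hz₁, hv₁, h1, h2, h3⟩ :=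
      approx (min ε ε₀) (lt_min hε hε₀) (hsmall _ (min_le_right _ _))
    have h := hmin (a := (x₁, y₁, z₁)) ⟨⟨hx₁, hy₁, hz₁⟩, hv₁⟩
    rw [zero_add]
    exact h.trans ((max_le h1 (max_le h2 h3)).trans (min_le_left _ _))
  exact ⟨a, ha, b, hb, c, hc', hv, (le_max_left _ _).trans hle,
    ((le_max_left _ _).trans (le_max_right _ _)).trans hle,
    ((le_max_right _ _).trans (le_max_right _ _)).trans hle⟩

/-! ### From triples to orthonormal frames -/

/-- Pairwise orthogonal nonzero vectors are, up to positive scaling, the rows of an orthogonal matrix. -/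
lemma exists_frame {e : Fin 3 → Fin 3 → ℝ} (h0 : ∀ k, e k ≠ 0)
    (h1 : ∀ k l, k ≠ l → e k ⬝ᵥ e l = 0) :
    ∃ Q ∈ Matrix.orthogonalGroup (Fin 3) ℝ, ∀ k, ∃ c : ℝ, 0 ≤ c ∧
      ∀ v, Q.mulVec v k = c * (e k ⬝ᵥ v) := by
  have hpos : ∀ k, 0 < e k ⬝ᵥ e k := fun k => by
    simpa using dotProduct_star_self_pos_iff.2 (h0 k)
  refine ⟨Matrix.of fun k => (√(e k ⬝ᵥ e k))⁻¹ • e k, ?_, fun k =>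
    ⟨(√(e k ⬝ᵥ e k))⁻¹, by positivity, fun v => ?_⟩⟩
  · rw [Matrix.mem_orthogonalGroup_iff]
    ext k l
    change ((√(e k ⬝ᵥ e k))⁻¹ • e k) ⬝ᵥ ((√(e l ⬝ᵥ e l))⁻¹ • e l) = _
    rw [smul_dotProduct, dotProduct_smul, smul_eq_mul, smul_eq_mul]
    by_cases hkl : k = l
    · subst hkl
      rw [Matrix.one_apply_eq, ← mul_assoc, ← mul_inv, Real.mul_self_sqrt (hpos k).le,
        inv_mul_cancel₀ (hpos k).ne']
    · rw [Matrix.one_apply_ne hkl, h1 k l hkl, mul_zero, mul_zero]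
  · change ((√(e k ⬝ᵥ e k))⁻¹ • e k) ⬝ᵥ v = _
    rw [smul_dotProduct, smul_eq_mul]

/-- The vectors `u i` can be moved to the nonnegative octant by an orthogonal map which sends two of them
to the same coordinate plane. -/
def Solvable {p : ℕ} (u : Fin p → Fin 3 → ℝ) : Prop :=
  ∃ Q ∈ Matrix.orthogonalGroup (Fin 3) ℝ, (∀ i, 0 ≤ Q.mulVec (u i)) ∧
      ∃ i j : Fin p, i ≠ j ∧ ∃ k : Fin 3,
        Q.mulVec (u i) k = 0 ∧ Q.mulVec (u j) k = 0

/-- The frame consists of `x`, the projection `y'` of `y` to `x⊥`, and the normal `n` of both on the side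
of `z`. That `n` pairs nonnegatively with `u k` follows by expanding the projection `z'` of `z` in
`y'` and `n`, since `⟨y', z'⟩ ≤ 0`. -/
lemma solvable_of_triple {p : ℕ} {u : Fin p → Fin 3 → ℝ} {x y z : Fin 3 → ℝ}
    (hindep : ∀ i j : Fin p, i ≠ j → LinearIndependent ℝ ![u i, u j])
    (hx : ∀ i, 0 ≤ x ⬝ᵥ u i) (hy : ∀ i, 0 ≤ y ⬝ᵥ u i) (hz : ∀ i, 0 ≤ z ⬝ᵥ u i)
    (hwall : OnTwoWalls u x)
    (hxy : x ⬝ᵥ y ≤ 0) (hxz : x ⬝ᵥ z ≤ 0) (hyz : y ⬝ᵥ z ≤ 0)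
    (cxy : x ⨯₃ y ≠ 0) (cxz : x ⨯₃ z ≠ 0) : Solvable u := by
  obtain ⟨i, j, hij, hi, hj⟩ := hwall
  have sqpos : ∀ v : Fin 3 → ℝ, v ≠ 0 → 0 < v ⬝ᵥ v := fun v hv => by
    simpa using dotProduct_star_self_pos_iff.2 hv
  have x0 : x ≠ 0 := by rintro rfl; simp at cxy
  have X := sqpos x x0
  -- the components of `y` and `z` orthogonal to `x`, scaled by `x ⬝ᵥ x`
  obtain ⟨y', hy'⟩ : ∃ y', y' = (x ⬝ᵥ x) • y - (x ⬝ᵥ y) • x := ⟨_, rfl⟩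
  obtain ⟨z', hz'⟩ : ∃ z', z' = (x ⬝ᵥ x) • z - (x ⬝ᵥ z) • x := ⟨_, rfl⟩
  have cy : x ⨯₃ y' = (x ⬝ᵥ x) • (x ⨯₃ y) := by simp [hy', cross_self]
  have cz : x ⨯₃ z' = (x ⬝ᵥ x) • (x ⨯₃ z) := by simp [hz', cross_self]
  have y0 : y' ≠ 0 := by
    rintro rfl
    exact cxy ((smul_eq_zero.1 (cy.symm.trans (by simp))).resolve_left X.ne')
  have z0 : z' ≠ 0 := by
    rintro rfl
    exact cxz ((smul_eq_zero.1 (cz.symm.trans (by simp))).resolve_left X.ne')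
  have ny : ∀ k, 0 ≤ y' ⬝ᵥ u k := fun k => by
    rw [hy', sub_dotProduct, smul_dotProduct, smul_dotProduct, smul_eq_mul, smul_eq_mul]
    nlinarith [mul_nonneg X.le (hy k), mul_nonneg (neg_nonneg.2 hxy) (hx k)]
  have nz : ∀ k, 0 ≤ z' ⬝ᵥ u k := fun k => by
    rw [hz', sub_dotProduct, smul_dotProduct, smul_dotProduct, smul_eq_mul, smul_eq_mul]
    nlinarith [mul_nonneg X.le (hz k), mul_nonneg (neg_nonneg.2 hxz) (hx k)]
  have oy : x ⬝ᵥ y' = 0 := by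
    rw [hy', dotProduct_sub, dotProduct_smul, dotProduct_smul, smul_eq_mul, smul_eq_mul]; ring
  have oz : x ⬝ᵥ z' = 0 := by
    rw [hz', dotProduct_sub, dotProduct_smul, dotProduct_smul, smul_eq_mul, smul_eq_mul]; ring
  have hyz' : y' ⬝ᵥ z' ≤ 0 := by
    have e : y' ⬝ᵥ z' = (x ⬝ᵥ x) * ((x ⬝ᵥ x) * (y ⬝ᵥ z) - (x ⬝ᵥ y) * (x ⬝ᵥ z)) := by
      rw [hy', hz']
      simp only [sub_dotProduct, dotProduct_sub, smul_dotProduct, dotProduct_smul, smul_eq_mul,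
        dotProduct_comm y x]
      ring
    rw [e]
    refine mul_nonpos_of_nonneg_of_nonpos X.le ?_
    nlinarith [mul_nonneg_of_nonpos_of_nonpos hxy hxz, mul_nonneg X.le (neg_nonneg.2 hyz)]
  have Y := sqpos y' y0
  obtain ⟨n, hn⟩ : ∃ n, n = x ⨯₃ y' := ⟨_, rfl⟩
  have xn : x ⬝ᵥ n = 0 := by rw [hn, dot_self_cross]
  have yn : y' ⬝ᵥ n = 0 := by rw [hn, dot_cross_self]
  have nn : n ⬝ᵥ n = (x ⬝ᵥ x) * (y' ⬝ᵥ y') := by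
    rw [hn, cross_dot_cross, oy]; ring
  have n0 : n ≠ 0 := by
    rintro rfl
    rw [dotProduct_zero] at nn
    exact (mul_pos X Y).ne nn
  have decomp : ∀ v : Fin 3 → ℝ, (n ⬝ᵥ z') * (n ⬝ᵥ v) =
      (x ⬝ᵥ x) * ((y' ⬝ᵥ y') * (z' ⬝ᵥ v) - (y' ⬝ᵥ z') * (y' ⬝ᵥ v)) := by
    intro v
    have e : (n ⬝ᵥ n) • z' = (n ⬝ᵥ z') • n + ((x ⬝ᵥ x) * (y' ⬝ᵥ z')) • y' := by
      -- two evaluations of the double cross product `n × (z' × n)`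
      have e1 : z' ⨯₃ n = (y' ⬝ᵥ z') • x := by
        rw [hn, cross_cross_eq_smul_sub_smul', dotProduct_comm z' y', oz, zero_smul, sub_zero]
      have e2 : n ⨯₃ x = (x ⬝ᵥ x) • y' := by
        rw [hn, cross_cross_eq_smul_sub_smul, dotProduct_comm y' x, oy, zero_smul, sub_zero]
      have e3 := cross_cross_eq_smul_sub_smul' n z' n
      rw [e1, map_smul, e2, smul_smul, dotProduct_comm z' n] at e3
      rw [mul_comm (x ⬝ᵥ x), e3]
      abel
    have := congrArg (· ⬝ᵥ v) e
    simp only [smul_dotProduct, add_dotProduct, smul_eq_mul, nn] at this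
    linarith
  have nonneg : ∀ k, 0 ≤ (n ⬝ᵥ z') * (n ⬝ᵥ u k) := fun k => by
    rw [decomp]
    refine mul_nonneg X.le ?_
    nlinarith [mul_nonneg Y.le (nz k), mul_nonneg (neg_nonneg.2 hyz') (ny k)]
  have nz0 : n ⬝ᵥ z' ≠ 0 := by
    -- otherwise `z'` is a negative multiple of `y'`, so all `u k` are orthogonal to `y'`, and the two
    -- that are orthogonal to `x` as well are both multiples of `n`
    intro h
    have hz2 : (y' ⬝ᵥ y') * (z' ⬝ᵥ z') = (y' ⬝ᵥ z') * (y' ⬝ᵥ z') := by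
      have := decomp z'
      rw [h, zero_mul] at this
      have := (mul_eq_zero.1 this.symm).resolve_left X.ne'
      linarith
    have yz0 : y' ⬝ᵥ z' ≠ 0 := fun h' => by
      rw [h', zero_mul] at hz2
      exact (mul_pos Y (sqpos z' z0)).ne' hz2
    have perp : ∀ k, y' ⬝ᵥ u k = 0 := fun k => by
      have h1 := decomp (u k)
      rw [h, zero_mul] at h1
      have h2 := (mul_eq_zero.1 h1.symm).resolve_left X.ne'
      have h3 : 0 < -(y' ⬝ᵥ z') := neg_pos.2 (lt_of_le_of_ne hyz' yz0)
      have h4 : -(y' ⬝ᵥ z') * (y' ⬝ᵥ u k) ≤ 0 := by linarith [mul_nonneg Y.le (nz k)]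
      exact le_antisymm (nonpos_of_mul_nonpos_right h4 h3) (ny k)
    have par : ∀ k, x ⬝ᵥ u k = 0 → (n ⬝ᵥ n) • u k = (n ⬝ᵥ u k) • n := by
      intro k hk
      have e1 : n ⨯₃ u k = 0 := by
        rw [hn, cross_cross_eq_smul_sub_smul, hk, perp k, zero_smul, zero_smul, sub_zero]
      have e2 := cross_cross_eq_smul_sub_smul' n (u k) n
      rw [← cross_anticomm n (u k), e1, neg_zero, map_zero, dotProduct_comm (u k) n] at e2
      exact sub_eq_zero.1 e2.symm
    have hli := LinearIndependent.pair_iff.1 (hindep i j hij)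
    have hpi := par i hi
    have hpj := par j hj
    -- the linear relation between `u i` and `u j` with coefficients `⟨n, u j⟩` and `-⟨n, u i⟩`, scaled
    have hz1 := hli ((n ⬝ᵥ u j) * (n ⬝ᵥ n)) (-((n ⬝ᵥ u i) * (n ⬝ᵥ n))) (by
      rw [neg_smul, mul_smul, mul_smul, hpi, hpj, smul_smul, smul_smul, mul_comm, add_neg_cancel])
    have hui : n ⬝ᵥ u i = 0 :=
      (mul_eq_zero.1 (neg_eq_zero.1 hz1.2)).resolve_right (sqpos n n0).ne'
    have hui0 : u i = 0 := by
      rw [hui, zero_smul] at hpi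
      exact (smul_eq_zero.1 hpi).resolve_left (sqpos n n0).ne'
    exact one_ne_zero (hli 1 0 (by rw [hui0]; simp)).1
  obtain ⟨Q, hQ, hrow⟩ := exists_frame (e := ![x, y', (n ⬝ᵥ z') • n])
    (by
      intro k
      fin_cases k
      exacts [x0, y0, smul_ne_zero nz0 n0])
    (by
      have yx : y' ⬝ᵥ x = 0 := by rw [dotProduct_comm, oy]
      have nx : n ⬝ᵥ x = 0 := by rw [dotProduct_comm, xn]
      have ny' : n ⬝ᵥ y' = 0 := by rw [dotProduct_comm, yn]
      intro k l hkl
      fin_cases k <;> fin_cases l <;> simp_all)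
  refine ⟨Q, hQ, fun m k => ?_, i, j, hij, 0, ?_, ?_⟩
  · obtain ⟨c, hc, hv⟩ := hrow k
    rw [hv]
    refine mul_nonneg hc ?_
    fin_cases k
    exacts [hx m, ny m, (smul_dotProduct (n ⬝ᵥ z') n (u m)).symm ▸ nonneg m]
  · obtain ⟨c, hc, hv⟩ := hrow 0
    rw [hv]
    exact mul_eq_zero_of_right _ hi
  · obtain ⟨c, hc, hv⟩ := hrow 0
    rw [hv]
    exact mul_eq_zero_of_right _ hj

/-! ### The spanning and the planar case -/

lemma solvable_of_spanning {p : ℕ} {u : Fin p → Fin 3 → ℝ}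
    (hindep : ∀ i j : Fin p, i ≠ j → LinearIndependent ℝ ![u i, u j]) (hu : ∀ i, 0 ≤ u i)
    (hspan : ∀ n : Fin 3 → ℝ, (∀ i, n ⬝ᵥ u i = 0) → n = 0) : Solvable u := by
  set w := ∑ i, u i with hw
  have wpos : ∀ k, 0 < w k := fun k => by
    refine lt_of_le_of_ne (by rw [hw, Finset.sum_apply]; exact Finset.sum_nonneg fun i _ => hu i k)
      fun h => ?_
    have hz : ∀ i, u i k = 0 := fun i => by
      rw [hw, Finset.sum_apply] at h
      exact (Finset.sum_eq_zero_iff_of_nonneg fun i _ => hu i k).1 h.symm i (Finset.mem_univ i)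
    have := congrFun (hspan (Pi.single k 1) fun i => by rw [single_dotProduct, hz i, mul_zero]) k
    simp at this
  -- the initial triple: the coordinate axes, which are pairwise orthogonal
  have hmem : ∀ k, Pi.single k (w k)⁻¹ ∈ Section u w := fun k =>
    ⟨fun i => by
      rw [single_dotProduct]
      exact mul_nonneg (inv_nonneg.2 (wpos k).le) (hu i k), by
      rw [single_dotProduct, inv_mul_cancel₀ (wpos k).ne']⟩
  have orth : ∀ k l : Fin 3, k ≠ l → ∀ a b : ℝ,
      (Pi.single k a : Fin 3 → ℝ) ⬝ᵥ Pi.single l b ≤ 0 := fun k l h a b => by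
    rw [single_dotProduct, Pi.single_eq_of_ne h, mul_zero]
  have ww : 0 < w ⬝ᵥ w := by
    rw [vec3_dotProduct]
    have := mul_pos (wpos 0) (wpos 0)
    nlinarith [mul_self_nonneg (w 1), mul_self_nonneg (w 2)]
  obtain ⟨x, hx, y, hy, z, hz, hwall, hxy, hxz, hyz⟩ :=
    exists_triple_onTwoWalls ww (isCompact_section hspan) (hmem 0) (hmem 1) (hmem 2)
      (orth 0 1 (by decide) _ _) (orth 0 2 (by decide) _ _) (orth 1 2 (by decide) _ _)
  -- two points of the section with nonpositive inner product are not parallel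
  have cross_ne : ∀ a ∈ Section u w, ∀ b ∈ Section u w, a ⬝ᵥ b ≤ 0 → a ⨯₃ b ≠ 0 := by
    intro a ha b hb hab h
    have e := cross_cross_eq_smul_sub_smul a b w
    rw [h, ha.2, hb.2, one_smul, one_smul, map_zero, LinearMap.zero_apply] at e
    have hba : b = a := (sub_eq_zero.1 e.symm)
    rw [hba] at hab
    have : a = 0 := by
      by_contra hne
      have : 0 < a ⬝ᵥ a := by simpa using dotProduct_star_self_pos_iff.2 hne
      linarith
    have h1 := ha.2
    rw [this, zero_dotProduct] at h1
    exact zero_ne_one h1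
  exact solvable_of_triple hindep hx.1 hy.1 hz.1 hwall hxy hxz hyz
    (cross_ne x hx y hy hxy) (cross_ne x hx z hz hxz)

/-- All the `u i` are orthogonal to `n`, so `n` and `-n` are both in the dual cone, and the projections of
the coordinate axes to `n⊥` stay in it. The projections of the axes `a ≠ b` have inner product of the
sign of `-n a * n b`. -/
lemma solvable_of_planar {p : ℕ} (hp : 2 ≤ p) {u : Fin p → Fin 3 → ℝ}
    (hindep : ∀ i j : Fin p, i ≠ j → LinearIndependent ℝ ![u i, u j]) (hu : ∀ i, 0 ≤ u i)
    {n : Fin 3 → ℝ} (hn0 : n ≠ 0) (hn : ∀ i, n ⬝ᵥ u i = 0) : Solvable u := by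
  have N : 0 < n ⬝ᵥ n := by simpa using dotProduct_star_self_pos_iff.2 hn0
  -- two coordinate axes not parallel to `n`, and weakly on the same side of the plane `n⊥`
  obtain ⟨a, b, hab, hnn, ha, hb⟩ : ∃ a b : Fin 3, a ≠ b ∧ 0 ≤ n a * n b ∧
      n ⨯₃ Pi.single a 1 ≠ 0 ∧ n ⨯₃ Pi.single b 1 ≠ 0 := by
    have cross_ne : ∀ a : Fin 3, n ⬝ᵥ n - n a * n a ≠ 0 → n ⨯₃ Pi.single a 1 ≠ 0 := by
      intro a h h0
      have e := cross_dot_cross n (Pi.single a 1) n (Pi.single a 1)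
      rw [h0, dotProduct_zero, dotProduct_single, single_dotProduct, dotProduct_single,
        Pi.single_eq_same] at e
      exact h (by linarith)
    rw [vec3_dotProduct] at N cross_ne
    have s0 := mul_self_nonneg (n 0)
    have s1 := mul_self_nonneg (n 1)
    have s2 := mul_self_nonneg (n 2)
    by_cases h0 : n 1 * n 1 + n 2 * n 2 = 0
    · have h1 : n 1 * n 1 = 0 := by linarith
      have h2 : n 2 * n 2 = 0 := by linarith
      exact ⟨1, 2, by decide, by rw [mul_self_eq_zero.1 h1, zero_mul],
        cross_ne 1 (by linarith), cross_ne 2 (by linarith)⟩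
    by_cases h1 : n 0 * n 0 + n 2 * n 2 = 0
    · have h3 : n 0 * n 0 = 0 := by linarith
      have h2 : n 2 * n 2 = 0 := by linarith
      exact ⟨0, 2, by decide, by rw [mul_self_eq_zero.1 h3, zero_mul],
        cross_ne 0 (by linarith), cross_ne 2 (by linarith)⟩
    by_cases h2 : n 0 * n 0 + n 1 * n 1 = 0
    · have h3 : n 0 * n 0 = 0 := by linarith
      have h4 : n 1 * n 1 = 0 := by linarith
      exact ⟨0, 1, by decide, by rw [mul_self_eq_zero.1 h3, zero_mul],
        cross_ne 0 (by linarith), cross_ne 1 (by linarith)⟩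
    have c0 := cross_ne 0 fun h => h0 (by linarith)
    have c1 := cross_ne 1 fun h => h1 (by linarith)
    have c2 := cross_ne 2 fun h => h2 (by linarith)
    rcases le_total 0 (n 0) with g0 | g0 <;> rcases le_total 0 (n 1) with g1 | g1 <;>
      rcases le_total 0 (n 2) with g2 | g2
    all_goals first
      | exact ⟨0, 1, by decide, mul_nonneg g0 g1, c0, c1⟩
      | exact ⟨0, 2, by decide, mul_nonneg g0 g2, c0, c2⟩
      | exact ⟨1, 2, by decide, mul_nonneg g1 g2, c1, c2⟩
      | exact ⟨0, 1, by decide, mul_nonneg_of_nonpos_of_nonpos g0 g1, c0, c1⟩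
      | exact ⟨0, 2, by decide, mul_nonneg_of_nonpos_of_nonpos g0 g2, c0, c2⟩
      | exact ⟨1, 2, by decide, mul_nonneg_of_nonpos_of_nonpos g1 g2, c1, c2⟩
  have hwall : OnTwoWalls u n := ⟨⟨0, by omega⟩, ⟨1, by omega⟩, by simp, hn _, hn _⟩
  have key : ∀ c : Fin 3, ∀ i, 0 ≤ ((n ⬝ᵥ n) • Pi.single c 1 - n c • n) ⬝ᵥ u i := fun c i => by
    rw [sub_dotProduct, smul_dotProduct, smul_dotProduct, hn i, single_dotProduct, smul_zero,
      sub_zero, one_mul, smul_eq_mul]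
    exact mul_nonneg N.le (hu i c)
  have perp : ∀ c : Fin 3, n ⬝ᵥ ((n ⬝ᵥ n) • Pi.single c 1 - n c • n) = 0 := fun c => by
    rw [dotProduct_sub, dotProduct_smul, dotProduct_smul, dotProduct_single, smul_eq_mul,
      smul_eq_mul]
    ring
  have hcross : ∀ c : Fin 3, n ⨯₃ Pi.single c 1 ≠ 0 →
      n ⨯₃ ((n ⬝ᵥ n) • Pi.single c 1 - n c • n) ≠ 0 := fun c h => by
    rw [map_sub, map_smul, map_smul, cross_self, smul_zero, sub_zero]
    exact smul_ne_zero N.ne' h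
  refine solvable_of_triple hindep (fun i => (hn i).ge) (key a) (key b) hwall (perp a).le
    (perp b).le ?_ (hcross a ha) (hcross b hb)
  rw [sub_dotProduct, smul_dotProduct, smul_dotProduct, perp b, single_dotProduct, Pi.sub_apply,
    Pi.smul_apply, Pi.smul_apply, Pi.single_eq_of_ne hab]
  simp only [smul_eq_mul, mul_zero, zero_sub, one_mul, sub_zero]
  nlinarith [mul_nonneg N.le hnn]

/-! ### The equivalence -/

theorem finiteness_condition_II
    (p : ℕ) (hp : 2 ≤ p) (u : Fin p → (Fin 3 → ℝ))
    (hindep : ∀ i j : Fin p, i ≠ j → LinearIndependent ℝ ![u i, u j]) :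
    (∃ Q ∈ Matrix.orthogonalGroup (Fin 3) ℝ, ∀ i, 0 ≤ Q.mulVec (u i)) ↔
    (∃ Q ∈ Matrix.orthogonalGroup (Fin 3) ℝ, (∀ i, 0 ≤ Q.mulVec (u i)) ∧
      ∃ i j : Fin p, i ≠ j ∧ ∃ k : Fin 3,
        Q.mulVec (u i) k = 0 ∧ Q.mulVec (u j) k = 0) := by
  refine ⟨?_, fun ⟨Q, hQ, h, _⟩ => ⟨Q, hQ, h⟩⟩
  rintro ⟨Q, hQ, hpos⟩
  have hinj : Q.mulVecLin.ker = ⊥ := by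
    refine LinearMap.ker_eq_bot'.2 fun v hv => ?_
    have h1 : Qᵀ.mulVec (Q.mulVec v) = 0 := by
      rw [show Q.mulVec v = 0 from hv, mulVec_zero]
    rwa [mulVec_mulVec, (Matrix.mem_orthogonalGroup_iff' (Fin 3) ℝ).1 hQ, one_mulVec] at h1
  have hind' : ∀ i j : Fin p, i ≠ j → LinearIndependent ℝ ![Q.mulVec (u i), Q.mulVec (u j)] := by
    intro i j hij
    have h := (hindep i j hij).map' Q.mulVecLin hinj
    have e : Q.mulVecLin ∘ ![u i, u j] = ![Q.mulVec (u i), Q.mulVec (u j)] := by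
      ext k
      fin_cases k <;> rfl
    rwa [e] at h
  have hsol : Solvable fun i => Q.mulVec (u i) := by
    by_cases hspan : ∀ n : Fin 3 → ℝ, (∀ i, n ⬝ᵥ Q.mulVec (u i) = 0) → n = 0
    · exact solvable_of_spanning hind' hpos hspan
    · push Not at hspan
      obtain ⟨n, hn, hn0⟩ := hspan
      exact solvable_of_planar hp hind' hpos hn0 hn
  obtain ⟨R, hR, h1, i, j, hij, k, h2, h3⟩ := hsol
  simp only [mulVec_mulVec] at h1 h2 h3
  exact ⟨R * Q, mul_mem hR hQ, h1, i, j, hij, k, h2, h3⟩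
end
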